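/- arXiv:1802.05700 — 3 statements merged into one kernel-verified Lean document; each statement's English description precedes it below -/
import Mathlib

section
/- Let X and Y be real Banach spaces, let f : X → Y be a local C¹-diffeomorphism, and let y ∈ Y. If the locally Lipschitz functional F_y(x) = ½‖f(x) − y‖² satisfies the weighted Chang Palais–Smale condition for some continuous nondecreasing function h : [0,∞) → [0,∞) with ∫₀^∞ dρ/(1+h(ρ)) = ∞, then the equation f(x) = y has exactly one solution x ∈ X. -/
/-!
Write `g = f - y` and `F = ½‖g‖²`. The proof replaces the mountain pass theorem by iterating a
continuous descent map.

Upper bounds for `λ_F` (`lambdaF_le`): the linearized functional `v ↦ ½‖g x + g'(x) v‖²` is convex,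
so if it admits no direction of descent at rate `m`, Hahn–Banach gives a subgradient of norm at most
`m`, and such a subgradient belongs to the Clarke gradient of `F` at `x`. Since `g'(x)` is
invertible, every point with `g x ≠ 0` has a direction of descent, and that direction serves nearby
points as well. The Palais–Smale condition therefore provides, on any band `c ≤ F ≤ C` free of
zeros, descent at rate at least `α / (1 + h ‖x‖)` with a uniform `α > 0` (`exists_descent_rate`).

Descent map (`exists_descent_map`): the descent directions at a point form a convex set, and so do
the admissible step lengths, so continuous selections exist by partitions of unity. They yield a
continuous `η : X → X` with `F (η x) ≤ F x - α / (1 + h ‖x‖) * ‖η x - x‖` everywhere and without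
fixed points in the band.

Orbits (`exists_iterate_lt`): an orbit staying in the band has finite length for the weight
`1 / (1 + h)`. As `∫ dρ / (1 + h ρ) = ∞`, it is bounded, hence Cauchy, and its limit is a fixed
point in the band, a contradiction. So every orbit starting below `C` drops below `c`.

Existence: if `g` had no zero, the band could be taken with `c = 0`, yet `F ≥ 0`. Uniqueness: let
`x₁ ≠ x₂` be zeros and let `c > 0` be a level such that `F ≥ c` on a small sphere around `x₁`
separating it from `x₂`. Zeros are fixed by `η`, and by compactness some iterate of `η` maps the
segment from `x₁` to `x₂` into `{F < c}`. The image is a connected set joining `x₁` to `x₂` without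
meeting the sphere, a contradiction.
-/

open Filter Topology Set

noncomputable section

/-- Clarke generalized directional derivative of `F` at `x` in direction `v`. -/
def clarkeDeriv {X : Type*} [NormedAddCommGroup X] [NormedSpace ℝ X]
    (F : X → ℝ) (x v : X) : ℝ :=
  Filter.limsup (fun p : X × ℝ => (F (x + p.1 + p.2 • v) - F (x + p.1)) / p.2)
    ((nhds (0 : X)) ×ˢ (nhdsWithin (0 : ℝ) (Set.Ioi 0)))

/-- Clarke generalized gradient of `F` at `x`. -/
def clarkeSubdiff {X : Type*} [NormedAddCommGroup X] [NormedSpace ℝ X]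
    (F : X → ℝ) (x : X) : Set (X →L[ℝ] ℝ) :=
  {w | ∀ v, w v ≤ clarkeDeriv F x v}

/-- `λ_F(x) = min_{w* ∈ ∂F(x)} ‖w*‖`. -/
def lambdaF {X : Type*} [NormedAddCommGroup X] [NormedSpace ℝ X]
    (F : X → ℝ) (x : X) : ℝ :=
  sInf ((fun w : X →L[ℝ] ℝ => ‖w‖) '' clarkeSubdiff F x)

/-- The weighted Chang Palais–Smale condition for the weight `h`. -/
def WeightedChangPS {X : Type*} [NormedAddCommGroup X] [NormedSpace ℝ X]
    (F : X → ℝ) (h : ℝ → ℝ) : Prop :=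
  ∀ x : ℕ → X, (∃ C : ℝ, ∀ n, |F (x n)| ≤ C) →
    Filter.Tendsto (fun n => lambdaF F (x n) * (1 + h ‖x n‖)) Filter.atTop (nhds 0) →
    ∃ (z : X) (φ : ℕ → ℕ), StrictMono φ ∧
      Filter.Tendsto (fun n => x (φ n)) Filter.atTop (nhds z)

/-- The Banach constant `Sur A = inf_{‖v*‖=1} ‖A* v*‖`. -/
def surBanach {X Y : Type*} [NormedAddCommGroup X] [NormedSpace ℝ X]
    [NormedAddCommGroup Y] [NormedSpace ℝ Y] (A : X →L[ℝ] Y) : ℝ :=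
  sInf ((fun v : Y →L[ℝ] ℝ => ‖v.comp A‖) '' {v : Y →L[ℝ] ℝ | ‖v‖ = 1})

/-- Norm-coercivity: `‖f x‖ → ∞` as `‖x‖ → ∞`. -/
def NormCoercive {X Y : Type*} [NormedAddCommGroup X] [NormedAddCommGroup Y]
    (f : X → Y) : Prop :=
  Filter.Tendsto (fun x => ‖f x‖) (Filter.comap (fun x : X => ‖x‖) Filter.atTop) Filter.atTop

/-! ### The function `½‖z‖²` -/

/-- The function `z ↦ ½‖z‖²` on the target space. -/
def halfSq {Y : Type*} [NormedAddCommGroup Y] (z : Y) : ℝ := (1/2 : ℝ) * ‖z‖ ^ 2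

section
variable {Y : Type*} [NormedAddCommGroup Y]

lemma halfSq_nonneg (z : Y) : 0 ≤ halfSq z := by unfold halfSq; positivity

lemma halfSq_eq_zero {z : Y} : halfSq z = 0 ↔ z = 0 := by simp [halfSq]

lemma continuous_halfSq : Continuous (halfSq : Y → ℝ) := by unfold halfSq; fun_prop

lemma abs_halfSq_sub_le (a b : Y) :
    |halfSq a - halfSq b| ≤ (1/2 : ℝ) * (‖a‖ + ‖b‖) * ‖a - b‖ := by
  have h1 : halfSq a - halfSq b = (1/2 : ℝ) * (‖a‖ + ‖b‖) * (‖a‖ - ‖b‖) := by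
    unfold halfSq; ring
  rw [h1, abs_mul, abs_of_nonneg (by positivity : (0:ℝ) ≤ 1/2 * (‖a‖ + ‖b‖))]
  exact mul_le_mul_of_nonneg_left (abs_norm_sub_norm_le a b) (by positivity)

end

section
variable {X Y : Type*} [NormedAddCommGroup X] [NormedSpace ℝ X]
  [NormedAddCommGroup Y] [NormedSpace ℝ Y]

lemma convexOn_halfSq : ConvexOn ℝ univ (halfSq : Y → ℝ) := by
  have h := (convexOn_univ_norm (E := Y)).pow (fun _ _ => norm_nonneg _) 2
  exact (h.smul (c := (1/2 : ℝ)) (by norm_num))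

/-! ### Upper bounds for `λ_F` -/

/-- Sandwich form of Hahn–Banach, by separating the strict epigraph of `φ` from the
hypograph of `-m‖·‖` in `X × ℝ`. -/
lemma exists_linear_minorant {φ : X → ℝ} (hc : Continuous φ) (hconv : ConvexOn ℝ univ φ)
    (h0 : φ 0 = 0) {m : ℝ} (hm : 0 ≤ m) (hle : ∀ v, -(m * ‖v‖) ≤ φ v) :
    ∃ w : X →L[ℝ] ℝ, ‖w‖ ≤ m ∧ ∀ v, w v ≤ φ v := by
  have hs : IsOpen {p : X × ℝ | p.1 ∈ univ ∧ φ p.1 < p.2} := by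
    simp only [mem_univ, true_and]
    exact isOpen_lt (hc.comp continuous_fst) continuous_snd
  have ht : Convex ℝ {p : X × ℝ | m * ‖p.1‖ + p.2 ≤ 0} := by
    have h1 : ConvexOn ℝ univ (fun p : X × ℝ => m * ‖p.1‖ + p.2) := by
      have := ((convexOn_univ_norm (E := X)).comp_linearMap (LinearMap.fst ℝ X ℝ)).smul hm
      have h2 : ConvexOn ℝ univ (fun p : X × ℝ => p.2) :=
        (LinearMap.snd ℝ X ℝ).convexOn convex_univ
      exact this.add h2
    simpa using h1.convex_le 0
  have hd : Disjoint {p : X × ℝ | p.1 ∈ univ ∧ φ p.1 < p.2}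
      {p : X × ℝ | m * ‖p.1‖ + p.2 ≤ 0} := by
    rw [Set.disjoint_left]
    rintro ⟨v, r⟩ ⟨-, h1⟩ h2
    have := hle v
    simp only [mem_ofPred_eq] at h1 h2
    linarith
  obtain ⟨l, u, hl1, hl2⟩ := geometric_hahn_banach_open hconv.convex_strict_epigraph hs ht hd
  have hsplit : ∀ v r, l (v, r) = l (v, 0) + r * l (0, 1) := by
    intro v r
    have : ((v, r) : X × ℝ) = (v, 0) + r • ((0 : X), (1 : ℝ)) := by simp
    rw [this, map_add, map_smul, smul_eq_mul]
  set b := l (0, 1) with hb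
  have hu0 : u ≤ 0 := by
    have := hl2 (0, 0) (by simp)
    rwa [show ((0 : X), (0 : ℝ)) = 0 from rfl, map_zero] at this
  have hr : ∀ r : ℝ, 0 < r → r * b < u := by
    intro r hr
    have := hl1 (0, r) (by simpa [h0] using hr)
    rw [hsplit, show ((0 : X), (0 : ℝ)) = 0 from rfl, map_zero] at this
    linarith
  have hbneg : b < 0 := by have := hr 1 one_pos; linarith
  have hu : u = 0 := by
    by_contra hne
    have hlt : u < 0 := lt_of_le_of_ne hu0 hne
    have := hr (u / (2 * b)) (div_pos_of_neg_of_neg hlt (by linarith))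
    have h2 : u / (2 * b) * b = u / 2 := by
      have := hbneg.ne
      field_simp
    linarith
  have hlow : ∀ v, -(m * ‖v‖) ≤ (-b⁻¹) * l (v, 0) := by
    intro v
    have := hl2 (v, -(m * ‖v‖)) (by simp)
    rw [hsplit, hu] at this
    have h3 : 0 ≤ (-b⁻¹) * (l (v, 0) + -(m * ‖v‖) * b) :=
      mul_nonneg (by simpa using hbneg.le) this
    have h4 : (-b⁻¹) * (l (v, 0) + -(m * ‖v‖) * b) = (-b⁻¹) * l (v, 0) + m * ‖v‖ := by
      field_simp [hbneg.ne]
      ring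
    linarith
  refine ⟨(-b⁻¹) • l.comp (ContinuousLinearMap.inl ℝ X ℝ), ?_, ?_⟩
  · refine ContinuousLinearMap.opNorm_le_bound _ hm fun v => ?_
    have h1 := hlow v
    have h2 := hlow (-v)
    have h3 : l (-v, 0) = - l (v, 0) := by
      rw [← map_neg]; simp
    rw [h3, norm_neg] at h2
    simp only [_root_.smul_apply, ContinuousLinearMap.comp_apply,
      ContinuousLinearMap.inl_apply, smul_eq_mul]
    rw [Real.norm_eq_abs, abs_le]
    constructor <;> linarith
  · intro v
    simp only [_root_.smul_apply, ContinuousLinearMap.comp_apply,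
      ContinuousLinearMap.inl_apply, smul_eq_mul]
    refine le_of_forall_gt_imp_ge_of_dense fun r hrr => ?_
    have := hl1 (v, r) ⟨mem_univ _, hrr⟩
    rw [hsplit, hu] at this
    have h3 : (-b⁻¹) * (l (v, 0) + r * b) ≤ 0 :=
      mul_nonpos_of_nonneg_of_nonpos (by simpa using hbneg.le) this.le
    have h4 : (-b⁻¹) * (l (v, 0) + r * b) = (-b⁻¹) * l (v, 0) - r := by
      field_simp [hbneg.ne]
      ring
    linarith

/-- Local Lipschitz continuity of `halfSq ∘ g` bounds its Clarke difference quotients, so that the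
real-valued `limsup` in `clarkeDeriv` is not a junk value. -/
lemma clarke_quotient_bounded {g : X → Y} {A : X →L[ℝ] Y} {x : X}
    (hg : HasStrictFDerivAt g A x) (v : X) :
    IsBoundedUnder (· ≤ ·) ((𝓝 (0 : X)) ×ˢ (𝓝[>] (0 : ℝ)))
      (fun p : X × ℝ =>
        (halfSq (g (x + p.1 + p.2 • v)) - halfSq (g (x + p.1))) / p.2) := by
  obtain ⟨K, s, hs, hK⟩ := hg.exists_lipschitzOnWith
  have hgc := hg.continuousAt
  have hfil : (𝓝 (0 : X)) ×ˢ (𝓝[>] (0 : ℝ)) ≤ 𝓝 ((0 : X), (0 : ℝ)) := by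
    rw [nhds_prod_eq]; exact Filter.prod_mono le_rfl nhdsWithin_le_nhds
  have t1 : Tendsto (fun p : X × ℝ => x + p.1 + p.2 • v) ((𝓝 (0 : X)) ×ˢ (𝓝[>] (0 : ℝ))) (𝓝 x) := by
    have : Continuous (fun p : X × ℝ => x + p.1 + p.2 • v) := by fun_prop
    simpa using (this.tendsto (0, 0)).mono_left hfil
  have t2 : Tendsto (fun p : X × ℝ => x + p.1) ((𝓝 (0 : X)) ×ˢ (𝓝[>] (0 : ℝ))) (𝓝 x) := by
    have : Continuous (fun p : X × ℝ => x + p.1) := by fun_prop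
    simpa using (this.tendsto (0, 0)).mono_left hfil
  have hpos : ∀ᶠ p : X × ℝ in (𝓝 (0 : X)) ×ˢ (𝓝[>] (0 : ℝ)), 0 < p.2 :=
    tendsto_snd.eventually (self_mem_nhdsWithin : Ioi (0:ℝ) ∈ 𝓝[>] (0:ℝ))
  have hbd : ∀ᶠ z in 𝓝 x, ‖g z‖ < ‖g x‖ + 1 :=
    hgc.norm.eventually (gt_mem_nhds (by linarith))
  refine ⟨(‖g x‖ + 1) * (K * ‖v‖), ?_⟩
  rw [eventually_map]
  filter_upwards [hpos, t1.eventually hs, t2.eventually hs, t1.eventually hbd,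
    t2.eventually hbd] with p hp hs1 hs2 hb1 hb2
  rw [div_le_iff₀ hp]
  refine (le_abs_self _).trans ((abs_halfSq_sub_le _ _).trans ?_)
  have h1 : ‖g (x + p.1 + p.2 • v) - g (x + p.1)‖ ≤ K * (p.2 * ‖v‖) := by
    have := hK.dist_le_mul _ hs1 _ hs2
    rw [dist_eq_norm, dist_eq_norm, add_sub_cancel_left, norm_smul, Real.norm_eq_abs,
      abs_of_pos hp] at this
    exact this
  calc (1/2 : ℝ) * (‖g (x + p.1 + p.2 • v)‖ + ‖g (x + p.1)‖) *
        ‖g (x + p.1 + p.2 • v) - g (x + p.1)‖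
      ≤ (‖g x‖ + 1) * (K * (p.2 * ‖v‖)) := by
        refine mul_le_mul (by linarith) h1 (norm_nonneg _) (by positivity)
    _ = (‖g x‖ + 1) * (K * ‖v‖) * p.2 := by ring

/-- A convex subgradient of `v ↦ ½‖g x + A v‖²` at `v = 0` is a Clarke subgradient of
`½‖g‖²` at `x`. -/
lemma mem_clarkeSubdiff {g : X → Y} {A : X →L[ℝ] Y} {x : X}
    (hg : HasStrictFDerivAt g A x) {w : X →L[ℝ] ℝ}
    (hw : ∀ v, w v ≤ halfSq (g x + A v) - halfSq (g x)) :
    w ∈ clarkeSubdiff (fun z => halfSq (g z)) x := by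
  intro v
  refine le_of_forall_lt fun b hb => lt_of_lt_of_le (b := (b + w v) / 2) (by linarith) ?_
  refine le_limsup_of_frequently_le ?_ (clarke_quotient_bounded hg v)
  have hT : Tendsto (fun t : ℝ => ((0 : X), t)) (𝓝[>] 0) ((𝓝 (0 : X)) ×ˢ (𝓝[>] (0 : ℝ))) :=
    tendsto_const_nhds.prodMk tendsto_id
  refine hT.frequently (Eventually.frequently ?_)
  -- The linearization error is `o(t)`.
  have herr : Tendsto (fun t : ℝ => (1/2 : ℝ) * (‖g (x + t • v)‖ + ‖g x + t • A v‖) *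
      ‖t⁻¹ • (g (x + t • v) - g x) - A v‖) (𝓝[>] 0) (𝓝 0) := by
    have hd : HasDerivAt (fun t : ℝ => g (x + t • v)) (A v) 0 := by
      have h1 : HasDerivAt (fun t : ℝ => x + t • v) v 0 := by
        simpa using ((hasDerivAt_id (0:ℝ)).smul_const v).const_add x
      have h2 : HasFDerivAt g A (x + (0:ℝ) • v) := by simpa using hg.hasFDerivAt
      exact h2.comp_hasDerivAt (0:ℝ) h1
    have h3 := hd.tendsto_slope_zero_right
    have h4 : Tendsto (fun t : ℝ => g (x + t • v)) (𝓝[>] 0) (𝓝 (g x)) := by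
      have := hd.continuousAt.tendsto
      simp only [zero_smul, add_zero] at this
      exact this.mono_left nhdsWithin_le_nhds
    have h5 : Tendsto (fun t : ℝ => g x + t • A v) (𝓝[>] 0) (𝓝 (g x)) := by
      have : Continuous (fun t : ℝ => g x + t • A v) := by fun_prop
      simpa using (this.tendsto 0).mono_left nhdsWithin_le_nhds
    have h6 : Tendsto (fun t : ℝ => t⁻¹ • (g (x + t • v) - g x) - A v) (𝓝[>] 0) (𝓝 0) := by
      simpa using h3.sub_const (A v)
    simpa using ((h4.norm.add h5.norm).const_mul (1/2 : ℝ)).mul h6.norm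
  filter_upwards [self_mem_nhdsWithin, herr.eventually (gt_mem_nhds
    (show (0:ℝ) < (w v - b) / 2 by linarith))] with t ht hsmall
  have ht : 0 < t := ht
  simp only [add_zero]
  rw [le_div_iff₀ ht]
  have h1 := hw (t • v)
  rw [map_smul, map_smul, smul_eq_mul] at h1
  have h2 := (neg_abs_le _).trans' (neg_le_neg (abs_halfSq_sub_le (g (x + t • v)) (g x + t • A v)))
  have h3 : ‖g (x + t • v) - (g x + t • A v)‖
      = t * ‖t⁻¹ • (g (x + t • v) - g x) - A v‖ := by
    rw [← abs_of_pos ht, ← Real.norm_eq_abs, ← norm_smul, Real.norm_eq_abs, abs_of_pos ht,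
      smul_sub, smul_inv_smul₀ ht.ne']
    congr 1; abel
  rw [h3] at h2
  have h4 := mul_lt_mul_of_pos_left hsmall ht
  nlinarith

lemma lambdaF_nonneg (F : X → ℝ) (x : X) : 0 ≤ lambdaF F x := by
  apply Real.sInf_nonneg
  rintro _ ⟨w, -, rfl⟩
  exact norm_nonneg _

/-- If the linearized functional has no direction of descent at rate `m`, then `λ_F(x) ≤ m`. -/
lemma lambdaF_le {g : X → Y} {A : X →L[ℝ] Y} {x : X}
    (hg : HasStrictFDerivAt g A x) {m : ℝ} (hm : 0 ≤ m)
    (hle : ∀ v, -(m * ‖v‖) ≤ halfSq (g x + A v) - halfSq (g x)) :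
    lambdaF (fun z => halfSq (g z)) x ≤ m := by
  obtain ⟨w, hw1, hw2⟩ := exists_linear_minorant
    (φ := fun v => halfSq (g x + A v) - halfSq (g x))
    ((continuous_halfSq.comp (by fun_prop)).sub continuous_const)
    (by
      have h1 : ConvexOn ℝ univ (fun v => halfSq (g x + A v)) :=
        (convexOn_halfSq.translate_right (g x)).comp_linearMap A.toLinearMap
      exact h1.sub (concaveOn_const _ convex_univ))
    (by simp) hm hle
  refine le_trans (csInf_le ⟨0, ?_⟩ (mem_image_of_mem _ (mem_clarkeSubdiff hg hw2))) hw1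
  rintro _ ⟨w, -, rfl⟩
  exact norm_nonneg _
/-! ### Construction of the descent map -/

/-- Compactness form of the Palais–Smale condition: on a band `c ≤ ½‖g‖² ≤ C` free of zeros of `g`,
the linearized functional can be decreased at a rate at least `α / (1 + h ‖x‖)`, with the same
`α > 0` throughout the band. -/
lemma exists_descent_rate {g : X → Y} {A : X → X ≃L[ℝ] Y}
    (hA : Continuous fun x => (A x : X →L[ℝ] Y))
    (hg : ∀ x, HasStrictFDerivAt g (A x : X →L[ℝ] Y) x) {h : ℝ → ℝ}
    (hnonneg : ∀ t ∈ Set.Ici (0:ℝ), 0 ≤ h t)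
    (hPS : WeightedChangPS (fun x => halfSq (g x)) h) {c C : ℝ}
    (hcz : ∀ x, c ≤ halfSq (g x) → g x ≠ 0) :
    ∃ α > 0, ∀ x, c ≤ halfSq (g x) → halfSq (g x) ≤ C →
      ∃ v, halfSq (g x + A x v) - halfSq (g x) < -(α / (1 + h ‖x‖) * ‖v‖) := by
  by_contra hcon
  push Not at hcon
  have hgc : Continuous g := continuous_iff_continuousAt.2 fun x => (hg x).continuousAt
  have hh : ∀ x : X, 0 ≤ h ‖x‖ := fun x => hnonneg _ (norm_nonneg x)
  choose x hxc hxC hx using fun n : ℕ => hcon (1 / ((n : ℝ) + 1)) Nat.one_div_pos_of_nat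
  have hlam : ∀ n, lambdaF (fun z => halfSq (g z)) (x n) ≤
      1 / ((n : ℝ) + 1) / (1 + h ‖x n‖) := fun n =>
    lambdaF_le (hg (x n)) (by have := hh (x n); positivity) (hx n)
  obtain ⟨z, φ, hφ, hz⟩ := hPS x
    ⟨C, fun n => by rw [abs_of_nonneg (halfSq_nonneg _)]; exact hxC n⟩ (by
      refine squeeze_zero (fun n => mul_nonneg (lambdaF_nonneg _ _) (by linarith [hh (x n)]))
        (fun n => ?_) tendsto_one_div_add_atTop_nhds_zero_nat
      have h1 : 0 < 1 + h ‖x n‖ := by linarith [hh (x n)]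
      exact (le_div_iff₀ h1).1 (hlam n))
  have hFz : c ≤ halfSq (g z) :=
    ge_of_tendsto' ((continuous_halfSq.comp hgc).continuousAt.tendsto.comp hz)
      (fun n => hxc (φ n))
  have hgz := hcz z hFz
  -- The Newton direction at the limit point annihilates the linearized residual.
  set v := (A z).symm (-g z) with hv
  have hlim : Tendsto (fun n => halfSq (g (x (φ n)) + A (x (φ n)) v) - halfSq (g (x (φ n)))
      + 1 / (((φ n : ℕ) : ℝ) + 1) * ‖v‖) atTop (𝓝 (-halfSq (g z))) := by
    have hc1 : Continuous fun x => halfSq (g x + (A x : X →L[ℝ] Y) v) - halfSq (g x) :=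
      (continuous_halfSq.comp (hgc.add (hA.clm_apply continuous_const))).sub
        (continuous_halfSq.comp hgc)
    have h1 := (hc1.tendsto z).comp hz
    have h2 := ((tendsto_one_div_add_atTop_nhds_zero_nat (𝕜 := ℝ)).comp
      hφ.tendsto_atTop).mul_const ‖v‖
    have h3 := h1.add h2
    simpa [hv, halfSq, Function.comp_def] using h3
  have hneg : -halfSq (g z) < 0 := by
    have : 0 < halfSq (g z) := lt_of_le_of_ne (halfSq_nonneg _)
      (fun h0 => hgz (halfSq_eq_zero.1 h0.symm))
    linarith
  obtain ⟨n, hn⟩ := (hlim.eventually (gt_mem_nhds hneg)).exists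
  have h1 := hx (φ n) v
  have h2 : 1 / (((φ n : ℕ) : ℝ) + 1) / (1 + h ‖x (φ n)‖) ≤ 1 / (((φ n : ℕ) : ℝ) + 1) :=
    div_le_self (by positivity) (by linarith [hh (x (φ n))])
  have h3 := mul_le_mul_of_nonneg_right h2 (norm_nonneg v)
  linarith

/-- A direction decreasing the linearized functional at `x₀` decreases the functional itself, for
all base points and directions nearby and all step lengths below a common bound. -/
lemma local_step {g : X → Y} {A : X →L[ℝ] Y} {x₀ : X}
    (hg : HasStrictFDerivAt g A x₀) {V : X → X} (hV : ContinuousAt V x₀)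
    {m : X → ℝ} (hm : ContinuousAt m x₀)
    (hdesc : halfSq (g x₀ + A (V x₀)) - halfSq (g x₀) < -(m x₀ * ‖V x₀‖)) :
    ∃ τ ∈ Ioc (0:ℝ) 1, ∀ᶠ x in 𝓝 x₀, ∀ s ∈ Icc 0 τ,
      halfSq (g (x + s • V x)) - halfSq (g x) ≤ -(m x * (s * ‖V x‖)) := by
  set L := ‖g x₀‖ + ‖A (V x₀)‖ + 1 with hL
  have hLpos : 0 < L := by positivity
  have hgc := hg.continuousAt
  obtain ⟨ε, hε, hεd⟩ : ∃ ε > 0, halfSq (g x₀ + A (V x₀)) - halfSq (g x₀)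
      + m x₀ * ‖V x₀‖ + L * (ε * ‖V x₀‖) < 0 := by
    have ht : Tendsto (fun ε : ℝ => halfSq (g x₀ + A (V x₀)) - halfSq (g x₀)
      + m x₀ * ‖V x₀‖ + L * (ε * ‖V x₀‖)) (𝓝[>] 0) (𝓝 (halfSq (g x₀ + A (V x₀)) - halfSq (g x₀)
      + m x₀ * ‖V x₀‖)) := by
      have : Continuous (fun ε : ℝ => halfSq (g x₀ + A (V x₀)) - halfSq (g x₀)
        + m x₀ * ‖V x₀‖ + L * (ε * ‖V x₀‖)) := by fun_prop
      simpa using (this.tendsto 0).mono_left nhdsWithin_le_nhds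
    obtain ⟨ε, h1, h2⟩ := ((ht.eventually (gt_mem_nhds (show _ < (0:ℝ) by linarith))).and
      self_mem_nhdsWithin).exists
    exact ⟨ε, h2, h1⟩
  have e1 : ∀ᶠ x in 𝓝 x₀, halfSq (g x + A (V x)) - halfSq (g x)
      + m x * ‖V x‖ + L * (ε * ‖V x‖) < 0 := by
    have hc : ContinuousAt (fun x => halfSq (g x + A (V x)) - halfSq (g x)
      + m x * ‖V x‖ + L * (ε * ‖V x‖)) x₀ := by
      have a1 : ContinuousAt (fun x => A (V x)) x₀ := A.continuous.continuousAt.comp hV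
      have a2 : ContinuousAt (fun x => halfSq (g x + A (V x))) x₀ :=
        continuous_halfSq.continuousAt.comp (hgc.add a1)
      have a3 : ContinuousAt (fun x => halfSq (g x)) x₀ := continuous_halfSq.continuousAt.comp hgc
      exact ((a2.sub a3).add (hm.mul hV.norm)).add
        (continuousAt_const.mul (continuousAt_const.mul hV.norm))
    exact hc.eventually (gt_mem_nhds hεd)
  have e2 : ∀ᶠ p : X × X in 𝓝 (x₀, x₀),
      ‖g p.1 - g p.2 - A (p.1 - p.2)‖ ≤ ε * ‖p.1 - p.2‖ := hg.isLittleO.def hε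
  have hpair : Tendsto (fun q : X × ℝ => (q.1 + q.2 • V q.1, q.1)) (𝓝 x₀ ×ˢ 𝓝 (0:ℝ))
      (𝓝 (x₀, x₀)) := by
    rw [nhds_prod_eq]
    refine Tendsto.prodMk ?_ tendsto_fst
    have := (tendsto_fst (f := 𝓝 x₀) (g := 𝓝 (0:ℝ))).add
      ((tendsto_snd (f := 𝓝 x₀) (g := 𝓝 (0:ℝ))).smul (hV.tendsto.comp tendsto_fst))
    simpa using this
  have e3 : ∀ᶠ x in 𝓝 x₀, ‖g x‖ + ‖A (V x)‖ < L := by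
    have : ContinuousAt (fun x => ‖g x‖ + ‖A (V x)‖) x₀ :=
      hgc.norm.add (A.continuous.continuousAt.comp hV).norm
    exact this.eventually (gt_mem_nhds (by linarith))
  have e4 : ∀ᶠ z in 𝓝 x₀, ‖g z‖ < L :=
    hgc.norm.eventually (gt_mem_nhds (by have := norm_nonneg (A (V x₀)); linarith))
  obtain ⟨P, hP, Q, hQ, hPQ⟩ := eventually_prod_iff.1
    ((hpair.eventually e2).and (hpair.fst_nhds.eventually e4))
  obtain ⟨δ, hδ, hδQ⟩ := Metric.eventually_nhds_iff.1 hQ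
  refine ⟨min (δ / 2) 1, ⟨lt_min (by linarith) one_pos, min_le_right _ _⟩, ?_⟩
  filter_upwards [e1, e3, hP] with x h1 h3 hPx s hs
  have hs0 := hs.1
  have hs1 : s ≤ 1 := hs.2.trans (min_le_right _ _)
  have hsδ : s ≤ δ / 2 := hs.2.trans (min_le_left _ _)
  obtain ⟨h2, h4⟩ := hPQ hPx (hδQ (y := s) (by
    rw [Real.dist_eq, sub_zero, abs_of_nonneg hs0]; linarith))
  simp only [add_sub_cancel_left, map_smul, norm_smul, Real.norm_eq_abs, abs_of_nonneg hs0] at h2 h4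
  -- Replace `g (x + s V)` by its linearization, then use convexity along the segment.
  have h5 := (le_abs_self _).trans (abs_halfSq_sub_le (g (x + s • V x)) (g x + s • A (V x)))
  have h6 : halfSq (g x + s • A (V x)) ≤ (1 - s) * halfSq (g x) + s * halfSq (g x + A (V x)) := by
    have := convexOn_halfSq.2 (mem_univ (g x)) (mem_univ (g x + A (V x)))
      (by linarith : (0:ℝ) ≤ 1 - s) hs0 (by ring)
    have heq : (1 - s) • g x + s • (g x + A (V x)) = g x + s • A (V x) := by module
    rwa [heq, smul_eq_mul, smul_eq_mul] at this
  have h7 : (1/2 : ℝ) * (‖g (x + s • V x)‖ + ‖g x + s • A (V x)‖) *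
      ‖g (x + s • V x) - (g x + s • A (V x))‖ ≤ L * (ε * (s * ‖V x‖)) := by
    have h8 : ‖g x + s • A (V x)‖ ≤ L := by
      refine (norm_add_le _ _).trans ?_
      rw [norm_smul, Real.norm_eq_abs, abs_of_nonneg hs0]
      have := mul_le_of_le_one_left (norm_nonneg (A (V x))) hs1
      linarith
    have h9 : ‖g (x + s • V x) - (g x + s • A (V x))‖ ≤ ε * (s * ‖V x‖) := by
      rwa [← sub_sub]
    exact mul_le_mul (by linarith) h9 (norm_nonneg _) hLpos.le
  have h10 := mul_nonpos_of_nonneg_of_nonpos hs0 h1.le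
  nlinarith

/-- A continuous self-map of `X` that never increases `½‖g‖²`, decreases it at least at the rate
`α / (1 + h ‖x‖)` times the displacement, and has no fixed points in the band `c ≤ ½‖g‖² ≤ C`. -/
lemma exists_descent_map {g : X → Y} {A : X → X ≃L[ℝ] Y}
    (hA : Continuous fun x => (A x : X →L[ℝ] Y))
    (hg : ∀ x, HasStrictFDerivAt g (A x : X →L[ℝ] Y) x) {h : ℝ → ℝ}
    (hcont : ContinuousOn h (Set.Ici 0))
    (hnonneg : ∀ t ∈ Set.Ici (0:ℝ), 0 ≤ h t)
    (hPS : WeightedChangPS (fun x => halfSq (g x)) h) {c C : ℝ}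
    (hcz : ∀ x, c ≤ halfSq (g x) → g x ≠ 0) :
    ∃ α > 0, ∃ η : X → X, Continuous η ∧
      (∀ x, halfSq (g (η x)) ≤ halfSq (g x) - α / (1 + h ‖x‖) * ‖η x - x‖) ∧
      ∀ x, c ≤ halfSq (g x) → halfSq (g x) ≤ C → η x ≠ x := by
  obtain ⟨α, hα, hrate⟩ := exists_descent_rate (C := C) hA hg hnonneg hPS hcz
  have hgc : Continuous g := continuous_iff_continuousAt.2 fun x => (hg x).continuousAt
  have hFc : Continuous fun x => halfSq (g x) := continuous_halfSq.comp hgc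
  have hh : ∀ x : X, 0 ≤ h ‖x‖ := fun x => hnonneg _ (norm_nonneg x)
  have hmc : Continuous fun x : X => α / (1 + h ‖x‖) := by
    have h1 : Continuous fun x : X => h ‖x‖ :=
      hcont.comp_continuous continuous_norm fun x => norm_nonneg x
    exact continuous_const.div (continuous_const.add h1) fun x => by linarith [hh x]
  set m : X → ℝ := fun x => α / (1 + h ‖x‖) with hm
  -- The complement of the band is open, so the conditions below are vacuous near its points.
  have hout : ∀ x, ¬ (c ≤ halfSq (g x) ∧ halfSq (g x) ≤ C) →
      ∀ᶠ z in 𝓝 x, ¬ (c ≤ halfSq (g z) ∧ halfSq (g z) ≤ C) := fun x hx =>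
    ((isClosed_le continuous_const hFc).inter
      (isClosed_le hFc continuous_const)).isOpen_compl.mem_nhds hx
  have hlin : ∀ v, Continuous fun x => halfSq (g x + A x v) - halfSq (g x) + m x * ‖v‖ := by
    intro v
    have h1 : Continuous fun x => g x + A x v := hgc.add (hA.clm_apply continuous_const)
    exact ((continuous_halfSq.comp h1).sub hFc).add (hmc.mul continuous_const)
  obtain ⟨V, hV⟩ := exists_continuous_forall_mem_convex_of_local_const
    (t := fun x => {v : X | (c ≤ halfSq (g x) ∧ halfSq (g x) ≤ C) →
      halfSq (g x + A x v) - halfSq (g x) + m x * ‖v‖ < 0})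
    (by
      intro x
      by_cases hx : c ≤ halfSq (g x) ∧ halfSq (g x) ≤ C
      · simp only [hx, and_self, true_imp_iff]
        have h1 : ConvexOn ℝ univ (fun v => halfSq (g x + A x v)) :=
          (convexOn_halfSq.translate_right (g x)).comp_linearMap (A x : X →L[ℝ] Y).toLinearMap
        have h2 : ConvexOn ℝ univ (fun v : X => m x * ‖v‖) :=
          (convexOn_univ_norm (E := X)).smul (div_nonneg hα.le (by linarith [hh x]))
        have h3 := (h1.sub (concaveOn_const (halfSq (g x)) convex_univ)).add h2
        simpa using h3.convex_lt 0
      · simp only [hx, false_imp_iff]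
        exact convex_univ)
    (by
      intro x
      by_cases hx : c ≤ halfSq (g x) ∧ halfSq (g x) ≤ C
      · obtain ⟨v, hv⟩ := hrate x hx.1 hx.2
        refine ⟨v, ?_⟩
        filter_upwards [(hlin v).continuousAt.eventually (gt_mem_nhds
          (show halfSq (g x + A x v) - halfSq (g x) + m x * ‖v‖ < 0 by
            simp only [hm]; linarith))] with z hz _ using hz
      · exact ⟨0, (hout x hx).mono fun z hz hz' => absurd hz' hz⟩)
  obtain ⟨τ, hτ⟩ := exists_continuous_forall_mem_convex_of_local_const
    (t := fun x => {τ : ℝ | 0 ≤ τ ∧ ((c ≤ halfSq (g x) ∧ halfSq (g x) ≤ C) → 0 < τ) ∧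
      ∀ s ∈ Icc 0 τ, halfSq (g (x + s • V x)) - halfSq (g x) ≤ -(m x * (s * ‖V x‖))})
    (by
      intro x
      refine OrdConnected.convex ⟨?_⟩
      rintro a ⟨ha0, ha1, ha2⟩ b ⟨hb0, hb1, hb2⟩ z ⟨haz, hzb⟩
      exact ⟨ha0.trans haz, fun hx => (ha1 hx).trans_le haz,
        fun s hs => hb2 s ⟨hs.1, hs.2.trans hzb⟩⟩)
    (by
      intro x
      by_cases hx : c ≤ halfSq (g x) ∧ halfSq (g x) ≤ C
      · obtain ⟨τ, hτ, hev⟩ := local_step (hg x) V.continuous.continuousAt hmc.continuousAt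
          (by have h1 : _ < _ := hV x hx
              simp only [ContinuousLinearEquiv.coe_coe]
              linarith)
        exact ⟨τ, hev.mono fun z hz => ⟨hτ.1.le, fun _ => hτ.1, hz⟩⟩
      · refine ⟨0, (hout x hx).mono fun z hz => ⟨le_rfl, fun hz' => absurd hz' hz, ?_⟩⟩
        intro s hs
        have : s = 0 := le_antisymm hs.2 hs.1
        simp [this])
  refine ⟨α, hα, fun x => x + τ x • V x, by fun_prop, fun x => ?_, fun x hxc hxC heq => ?_⟩
  · obtain ⟨h0, -, h2⟩ := hτ x
    have := h2 (τ x) ⟨h0, le_rfl⟩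
    rw [add_sub_cancel_left, norm_smul, Real.norm_eq_abs, abs_of_nonneg h0]
    simp only [hm] at this
    linarith
  · have h1 : 0 < τ x := (hτ x).2.1 ⟨hxc, hxC⟩
    have h2 : V x = 0 := by
      have : τ x • V x = 0 := by simpa using heq
      exact (smul_eq_zero.1 this).resolve_left h1.ne'
    have h3 : _ < _ := hV x ⟨hxc, hxC⟩
    simp [h2] at h3

/-! ### Orbits of the descent map -/

/-- Discrete Gronwall-type bound. Since `1 / (1 + h)` is nonincreasing, `H r = ∫₀ʳ dρ / (1 + h ρ)`
grows by at most `d n / (1 + h (r n))` at the `n`-th step; as `H` is unbounded, `r` is bounded. -/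
lemma bounded_of_weighted_length {h : ℝ → ℝ}
    (hmono : MonotoneOn h (Set.Ici 0)) (hnonneg : ∀ t ∈ Set.Ici (0:ℝ), 0 ≤ h t)
    (hint : ∫⁻ ρ in Set.Ioi (0:ℝ), ENNReal.ofReal (1 / (1 + h ρ)) = ⊤)
    {r d : ℕ → ℝ} (hr : ∀ n, 0 ≤ r n) (hd : ∀ n, 0 ≤ d n) (hrd : ∀ n, r (n + 1) ≤ r n + d n)
    {M : ℝ} (hM : ∀ n, ∑ i ∈ Finset.range n, 1 / (1 + h (r i)) * d i ≤ M) :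
    ∃ R, ∀ n, r n ≤ R := by
  by_contra hcon
  push Not at hcon
  set k : ℝ → ℝ := fun ρ => 1 / (1 + h ρ) with hk
  have hk0 : ∀ t, 0 ≤ t → 0 ≤ k t := fun t ht => by
    have := hnonneg t ht
    simp only [hk]; positivity
  have hanti : AntitoneOn k (Ici 0) := fun a ha b hb hab => by
    have h1 := hnonneg a ha
    exact one_div_le_one_div_of_le (by linarith) (by linarith [hmono ha hb hab])
  have hii : ∀ a b, 0 ≤ a → 0 ≤ b → IntervalIntegrable k MeasureTheory.volume a b := fun a b ha hb =>
    (hanti.mono fun t ht => (le_min ha hb).trans ht.1).intervalIntegrable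
  have hincr : ∀ a b, 0 ≤ a → a ≤ b → ∫ t in (0:ℝ)..a, k t ≤ ∫ t in (0:ℝ)..b, k t := by
    intro a b ha hab
    rw [← intervalIntegral.integral_add_adjacent_intervals (hii 0 a le_rfl ha)
      (hii a b ha (ha.trans hab))]
    have := intervalIntegral.integral_nonneg (μ := MeasureTheory.volume) hab
      (fun t ht => hk0 t (ha.trans ht.1))
    linarith
  have hstep : ∀ n, ∫ t in (0:ℝ)..r (n + 1), k t ≤ (∫ t in (0:ℝ)..r n, k t) + k (r n) * d n := by
    intro n
    have hkd := mul_nonneg (hk0 _ (hr n)) (hd n)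
    rcases le_total (r (n + 1)) (r n) with hle | hle
    · linarith [hincr _ _ (hr (n + 1)) hle]
    · rw [← intervalIntegral.integral_add_adjacent_intervals (hii 0 (r n) le_rfl (hr n))
        (hii (r n) (r (n + 1)) (hr n) (hr (n + 1)))]
      have h1 : ∫ t in (r n)..r (n + 1), k t ≤ ∫ _ in (r n)..r (n + 1), k (r n) :=
        intervalIntegral.integral_mono_on hle (hii _ _ (hr n) (hr (n + 1)))
          intervalIntegrable_const
          fun t ht => hanti (hr n) ((hr n).trans ht.1) ht.1
      rw [intervalIntegral.integral_const, smul_eq_mul] at h1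
      have h2 : (r (n + 1) - r n) * k (r n) ≤ d n * k (r n) :=
        mul_le_mul_of_nonneg_right (by linarith [hrd n]) (hk0 _ (hr n))
      linarith
  have hsum : ∀ n, ∫ t in (0:ℝ)..r n, k t ≤
      (∫ t in (0:ℝ)..r 0, k t) + ∑ i ∈ Finset.range n, k (r i) * d i := by
    intro n
    induction n with
    | zero => simp
    | succ n ih => rw [Finset.sum_range_succ]; linarith [hstep n]
  have hbd : ∀ R, 0 ≤ R → ∫ t in (0:ℝ)..R, k t ≤ (∫ t in (0:ℝ)..r 0, k t) + M := by
    intro R hR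
    obtain ⟨n, hn⟩ := hcon R
    linarith [hincr R (r n) hR hn.le, hsum n, hM n]
  have hI : MeasureTheory.IntegrableOn k (Ioi 0) := by
    refine MeasureTheory.integrableOn_Ioi_of_intervalIntegral_norm_bounded
      (l := atTop) (b := fun n : ℕ => (n : ℝ)) ((∫ t in (0:ℝ)..r 0, k t) + M) 0
      (fun n => ?_) tendsto_natCast_atTop_atTop (Eventually.of_forall fun n => ?_)
    · exact (hii 0 n le_rfl n.cast_nonneg).1
    · have : ∫ t in (0:ℝ)..(n:ℝ), ‖k t‖ = ∫ t in (0:ℝ)..(n:ℝ), k t := by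
        refine intervalIntegral.integral_congr fun t ht => ?_
        rw [uIcc_of_le n.cast_nonneg] at ht
        exact Real.norm_of_nonneg (hk0 t ht.1)
      rw [this]
      exact hbd n n.cast_nonneg
  exact (hI.lintegral_lt_top).ne hint

/-- Iterates of a descent map starting below level `C` eventually drop below level `c`: otherwise
the orbit has finite weighted length, hence is bounded, hence Cauchy, and its limit is a fixed point
inside the band `c ≤ F ≤ C`. -/
lemma exists_iterate_lt [CompleteSpace X] {F : X → ℝ} (hF : Continuous F) (hF0 : ∀ x, 0 ≤ F x)
    {h : ℝ → ℝ} (hmono : MonotoneOn h (Set.Ici 0)) (hnonneg : ∀ t ∈ Set.Ici (0:ℝ), 0 ≤ h t)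
    (hint : ∫⁻ ρ in Set.Ioi (0:ℝ), ENNReal.ofReal (1 / (1 + h ρ)) = ⊤)
    {c C α : ℝ} (hα : 0 < α) {η : X → X} (hη : Continuous η)
    (hdesc : ∀ x, F (η x) ≤ F x - α / (1 + h ‖x‖) * ‖η x - x‖)
    (hfix : ∀ x, c ≤ F x → F x ≤ C → η x ≠ x) {x₀ : X} (hx₀ : F x₀ ≤ C) :
    ∃ n, F (η^[n] x₀) < c := by
  by_contra hcon
  push Not at hcon
  have hh : ∀ x : X, 0 ≤ h ‖x‖ := fun x => hnonneg _ (norm_nonneg x)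
  set x : ℕ → X := fun n => η^[n] x₀ with hx
  have hsucc : ∀ n, x (n + 1) = η (x n) := fun n => Function.iterate_succ_apply' η n x₀
  have hsum : ∀ n, α * ∑ i ∈ Finset.range n, 1 / (1 + h ‖x i‖) * ‖x (i + 1) - x i‖
      ≤ F x₀ - F (x n) := by
    intro n
    induction n with
    | zero => simp [hx]
    | succ n ih =>
      rw [Finset.sum_range_succ, mul_add]
      have h1 := hdesc (x n)
      rw [← hsucc] at h1
      have h2 : α * (1 / (1 + h ‖x n‖) * ‖x (n + 1) - x n‖) =
        α / (1 + h ‖x n‖) * ‖x (n + 1) - x n‖ := by ring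
      linarith
  have hterm : ∀ i, 0 ≤ 1 / (1 + h ‖x i‖) * ‖x (i + 1) - x i‖ := fun i => by
    have := hh (x i); positivity
  have hM : ∀ n, ∑ i ∈ Finset.range n, 1 / (1 + h ‖x i‖) * ‖x (i + 1) - x i‖ ≤ F x₀ / α := by
    intro n
    rw [le_div_iff₀ hα]
    linarith [hsum n, hF0 (x n)]
  obtain ⟨R, hR⟩ := bounded_of_weighted_length hmono hnonneg hint (r := fun n => ‖x n‖)
    (d := fun n => ‖x (n + 1) - x n‖) (fun n => norm_nonneg _) (fun n => norm_nonneg _)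
    (fun n => by simpa using norm_add_le (x n) (x (n + 1) - x n)) hM
  have hR0 : 0 ≤ R := (norm_nonneg (x 0)).trans (hR 0)
  have hcau : CauchySeq x := by
    refine cauchySeq_of_summable_dist ?_
    have hs := (summable_of_sum_range_le hterm hM).mul_left (1 + h R)
    refine Summable.of_nonneg_of_le (fun n => dist_nonneg) (fun n => ?_) hs
    have h1 := hmono (norm_nonneg (x n)) hR0 (hR n)
    have h2 : 0 < 1 + h ‖x n‖ := by linarith [hh (x n)]
    rw [dist_comm, dist_eq_norm, ← mul_assoc]
    refine le_mul_of_one_le_left (norm_nonneg _) ?_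
    rw [mul_one_div, le_div_iff₀ h2]
    linarith
  obtain ⟨z, hz⟩ := cauchySeq_tendsto_of_complete hcau
  have hFz := (hF.tendsto z).comp hz
  refine hfix z (ge_of_tendsto' hFz hcon) (le_of_tendsto' hFz fun n => ?_) ?_
  · have h1 : 0 ≤ α * ∑ i ∈ Finset.range n, 1 / (1 + h ‖x i‖) * ‖x (i + 1) - x i‖ :=
      mul_nonneg hα.le (Finset.sum_nonneg fun i _ => hterm i)
    simp only [Function.comp_apply]
    linarith [hsum n]
  · have h1 : Tendsto (fun n => x (n + 1)) atTop (𝓝 (η z)) := by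
      simpa only [hsucc, Function.comp_def] using (hη.tendsto z).comp hz
    exact tendsto_nhds_unique h1 (hz.comp (tendsto_add_atTop_nat 1))

/-! ### Existence and uniqueness of the zero -/

/-- Below a small enough positive level, a zero `x₁` of `g` is isolated: points of the closed `r`-ball
around `x₁` below that level lie in the open `r / 2`-ball. The radius can be taken below any
`ρ > 0`. -/
lemma exists_isolating_level {g : X → Y} {A : X ≃L[ℝ] Y} {x₁ : X}
    (hg : HasStrictFDerivAt g (A : X →L[ℝ] Y) x₁) (h1 : g x₁ = 0) {ρ : ℝ} (hρ : 0 < ρ) :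
    ∃ r > 0, r ≤ ρ ∧ ∃ c > 0, ∀ x, ‖x - x₁‖ ≤ r → halfSq (g x) < c → ‖x - x₁‖ < r / 2 := by
  have hO : (fun x => x - x₁) =O[𝓝 x₁] fun x => g x - g x₁ :=
    (hg.hasFDerivAt.isThetaTVS_sub A.toHomeomorph.isInducing).symm.isBigOTVS.isBigO
  obtain ⟨K, hK, hb⟩ := hO.exists_pos
  obtain ⟨δ, hδ, hball⟩ := Metric.eventually_nhds_iff.1 hb.bound
  refine ⟨min (δ / 2) ρ, lt_min (by linarith) hρ, min_le_right _ _,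
    (1/2 : ℝ) * (min (δ / 2) ρ / 2 / K) ^ 2, ?_, ?_⟩
  · have : 0 < min (δ / 2) ρ := lt_min (by linarith) hρ
    positivity
  · intro x hx hFx
    have hx' := hball (y := x) (by
      rw [dist_eq_norm]; linarith [min_le_left (δ / 2) ρ])
    rw [h1, sub_zero] at hx'
    have hr : 0 < min (δ / 2) ρ := lt_min (by linarith) hρ
    have h2 : ‖g x‖ < min (δ / 2) ρ / 2 / K := by
      unfold halfSq at hFx
      exact lt_of_pow_lt_pow_left₀ 2 (by positivity) (by linarith)
    rw [lt_div_iff₀ hK] at h2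
    linarith

/-- A local `C¹`-diffeomorphism `g` whose functional `½‖g‖²` satisfies the weighted Palais–Smale
condition has exactly one zero. -/
lemma existsUnique_zero [CompleteSpace X] {g : X → Y} {A : X → X ≃L[ℝ] Y}
    (hA : Continuous fun x => (A x : X →L[ℝ] Y))
    (hg : ∀ x, HasStrictFDerivAt g (A x : X →L[ℝ] Y) x) {h : ℝ → ℝ}
    (hcont : ContinuousOn h (Set.Ici 0)) (hmono : MonotoneOn h (Set.Ici 0))
    (hnonneg : ∀ t ∈ Set.Ici (0:ℝ), 0 ≤ h t)
    (hint : ∫⁻ ρ in Set.Ioi (0:ℝ), ENNReal.ofReal (1 / (1 + h ρ)) = ⊤)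
    (hPS : WeightedChangPS (fun x => halfSq (g x)) h) :
    ∃! x, g x = 0 := by
  have hgc : Continuous g := continuous_iff_continuousAt.2 fun x => (hg x).continuousAt
  have hFc : Continuous fun x => halfSq (g x) := continuous_halfSq.comp hgc
  refine existsUnique_of_exists_of_unique ?_ ?_
  · -- Without zeros, the band may be taken with `c = 0`, and no orbit can drop below level `0`.
    by_contra hno
    push Not at hno
    obtain ⟨α, hα, η, hη, hdesc, hfix⟩ := exists_descent_map (c := 0) (C := halfSq (g 0))
      hA hg hcont hnonneg hPS fun x _ => hno x
    obtain ⟨n, hn⟩ := exists_iterate_lt (F := fun x => halfSq (g x)) hFc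
      (fun x => halfSq_nonneg _) hmono hnonneg hint hα hη hdesc hfix (x₀ := 0) le_rfl
    exact absurd hn (not_lt.2 (halfSq_nonneg _))
  · intro x₁ x₂ h1 h2
    by_contra hne
    have hpos : 0 < ‖x₂ - x₁‖ := norm_pos_iff.2 (sub_ne_zero.2 (Ne.symm hne))
    obtain ⟨r, hr, hrle, c, hc, hsep⟩ := exists_isolating_level (hg x₁) h1 hpos
    have hcz : ∀ x, c ≤ halfSq (g x) → g x ≠ 0 := fun x hx h0 => by
      rw [halfSq_eq_zero.2 h0] at hx; linarith
    have hcomp : IsCompact (segment ℝ x₁ x₂) := by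
      rw [segment_eq_image_lineMap]
      exact isCompact_Icc.image AffineMap.lineMap_continuous
    obtain ⟨C, hC⟩ := (hcomp.image hFc).bddAbove
    obtain ⟨α, hα, η, hη, hdesc, hfix⟩ := exists_descent_map (C := C) hA hg hcont hnonneg hPS hcz
    have hrate : ∀ x : X, 0 < α / (1 + h ‖x‖) := fun x => by
      have := hnonneg _ (norm_nonneg x); positivity
    have hdec : ∀ x, halfSq (g (η x)) ≤ halfSq (g x) := fun x => by
      have := mul_nonneg (hrate x).le (norm_nonneg (η x - x))
      linarith [hdesc x]
    -- Zeros of `g` are fixed by `η`, since the functional cannot decrease there.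
    have hzero : ∀ x, g x = 0 → ∀ n, η^[n] x = x := by
      intro x hx n
      refine Function.iterate_fixed ?_ n
      have h3 := hdesc x
      rw [halfSq_eq_zero.2 hx] at h3
      have h4 : ‖η x - x‖ ≤ 0 := by
        by_contra hcon
        push Not at hcon
        linarith [mul_pos (hrate x) hcon, halfSq_nonneg (g (η x))]
      exact sub_eq_zero.1 (norm_le_zero_iff.1 h4)
    -- By compactness, one iterate pushes the whole segment below level `c`.
    obtain ⟨N, hN⟩ := hcomp.elim_directed_cover (fun n => {x | halfSq (g (η^[n] x)) < c})
      (fun n => isOpen_lt (hFc.comp (hη.iterate n)) continuous_const)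
      (fun x hx => mem_iUnion.2 (exists_iterate_lt (F := fun x => halfSq (g x)) hFc
        (fun x => halfSq_nonneg _) hmono hnonneg hint hα hη hdesc hfix
        (hC (mem_image_of_mem _ hx))))
      (directed_of_isDirected_le (monotone_nat_of_le_succ fun n x hx => by
        have h3 : halfSq (g (η^[n] x)) < c := hx
        show halfSq (g (η^[n + 1] x)) < c
        rw [Function.iterate_succ_apply']
        exact (hdec _).trans_lt h3))
    -- The image is connected and joins `x₁` to `x₂`, but avoids the sphere of radius `r`.
    have hconn : IsPreconnected (η^[N] '' segment ℝ x₁ x₂) :=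
      (convex_segment x₁ x₂).isPreconnected.image _ (hη.iterate N).continuousOn
    have hm1 : x₁ ∈ η^[N] '' segment ℝ x₁ x₂ :=
      ⟨x₁, left_mem_segment ℝ x₁ x₂, hzero x₁ h1 N⟩
    have hm2 : x₂ ∈ η^[N] '' segment ℝ x₁ x₂ :=
      ⟨x₂, right_mem_segment ℝ x₁ x₂, hzero x₂ h2 N⟩
    obtain ⟨z, hz, hzr⟩ := hconn.intermediate_value hm1 hm2
      (f := fun z => ‖z - x₁‖) (by fun_prop) (show r ∈ Icc _ _ by
        constructor
        · simpa using hr.le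
        · exact hrle)
    obtain ⟨x, hx, rfl⟩ := hz
    have hzr : ‖η^[N] x - x₁‖ = r := hzr
    have := hsep _ hzr.le (hN hx)
    linarith
end

theorem uniqueness_and_existence {X Y : Type*} [NormedAddCommGroup X] [NormedSpace ℝ X] [CompleteSpace X]
    [NormedAddCommGroup Y] [NormedSpace ℝ Y] [CompleteSpace Y]
    (f : X → Y) (f' : X → X ≃L[ℝ] Y)
    (hC1 : ContDiff ℝ 1 f)
    (hdf : ∀ x : X, HasFDerivAt f (f' x : X →L[ℝ] Y) x)
    (y : Y) (h : ℝ → ℝ)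
    (hcont : ContinuousOn h (Set.Ici 0))
    (hmono : MonotoneOn h (Set.Ici 0))
    (hnonneg : ∀ t ∈ Set.Ici (0:ℝ), 0 ≤ h t)
    (hint : ∫⁻ ρ in Set.Ioi (0:ℝ), ENNReal.ofReal (1 / (1 + h ρ)) = ⊤)
    (hPS : WeightedChangPS (fun x => (1/2 : ℝ) * ‖f x - y‖ ^ 2) h) :
    ∃! x : X, f x = y := by
  have hstrict : ∀ x, HasStrictFDerivAt f (f' x : X →L[ℝ] Y) x := fun x =>
    hC1.contDiffAt.hasStrictFDerivAt' (hdf x) one_ne_zero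
  have hA : Continuous fun x => (f' x : X →L[ℝ] Y) := by
    have h1 := hC1.continuous_fderiv one_ne_zero
    have h2 : fderiv ℝ f = fun x => (f' x : X →L[ℝ] Y) := funext fun x => (hdf x).fderiv
    rwa [h2] at h1
  have key := existsUnique_zero (g := fun x => f x - y) hA (fun x => (hstrict x).sub_const y)
    hcont hmono hnonneg hint hPS
  simpa only [sub_eq_zero] using key
end
end

section
/- Let X and Y be real Banach spaces, let f : X → Y be a local C¹-diffeomorphism, and let h : [0,∞) → [0,∞) be a continuous nondecreasing function with ∫₀^∞ dρ/(1+h(ρ)) = ∞. If for every y ∈ Y the functional F_y(x) = ½‖f(x) − y‖² satisfies the weighted Chang Palais–Smale condition for h, then f is a norm-coercive C¹-diffeomorphism of X onto Y. -/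
/-!
For each `y` put `N x = ‖f x - y‖`, and let `H r = ∫₀ʳ dρ / (1 + h ρ)`, which is unbounded.

* The Palais–Smale condition yields `κ > 0` such that at every point of a region `b ≤ N ≤ M`
  with `b > 0` (or with `b` arbitrary, if `y` is not a value of `f`) there is a direction along which
  `N` decreases at the rate `κ / (1 + h ‖x‖)` (`exists_uniform_descent`). If not, Hahn–Banach
  provides functionals norming `f x - y` which, composed with the derivative, give Clarke gradients
  of small weighted norm; the resulting Palais–Smale sequence has a limit at which the invertibility
  of the derivative is contradicted.
* Along such directions `H ‖x‖` changes by at most a constant times the decrease of `N`. Since `H` is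
  unbounded, descent from a compact family remains in a ball, where the rate of descent is bounded
  below. A Brezis–Browder ordering argument, with continuous selections of descent directions in place
  of a gradient flow, moves every compact family into `{N ≤ a}`
  (`exists_descent_deformation`, `exists_uniform_deformation`).

Surjectivity: if `y` is missed, a single point can be moved to negative values of `N`.
Injectivity: a segment joining two preimages of `y` is moved, with fixed end points, into
`{N ≤ a}` for small `a`, where the local inverse at one end point separates it from the other
(`injective_of_deformation`). Coercivity: every point of `{‖f‖ ≤ M}` is moved into `{‖f‖ ≤ a}`,
which is bounded for small `a` since the inverse is continuous, and `H ‖x‖` changes by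
a bounded amount.
-/

open Filter Topology Set

noncomputable section

/-! ### Deforming compact families along descent directions -/

/-- An ordering principle of Brezis–Browder type. The second coordinate is a time which dominates
the distance travelled; if the time reachable from `p₀` is bounded, some reachable point admits no
successor with strictly larger time. -/
theorem exists_maximal_time {E : Type*} [MetricSpace E] [CompleteSpace E]
    (r : E × ℝ → E × ℝ → Prop) (hrefl : ∀ p, r p p)
    (htrans : ∀ p q u, r p q → r q u → r p u)
    (hclosed : ∀ p, IsClosed {q | r p q})
    (hdist : ∀ p q, r p q → dist p.1 q.1 ≤ q.2 - p.2)
    (p₀ : E × ℝ) (S : ℝ) (hS : ∀ q, r p₀ q → q.2 ≤ S) :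
    ∃ p, r p₀ p ∧ ∀ q, r p q → q.2 ≤ p.2 := by
  let σ : E × ℝ → ℝ := fun p => sSup (Prod.snd '' {q | r p q})
  have hbdd : ∀ p, r p₀ p → BddAbove (Prod.snd '' {q | r p q}) := by
    rintro p hp
    refine ⟨S, ?_⟩
    rintro _ ⟨q, hq, rfl⟩
    exact hS q (htrans _ _ _ hp hq)
  have hσ : ∀ p q, r p₀ p → r p q → q.2 ≤ σ p := fun p q hp hq =>
    le_csSup (hbdd p hp) ⟨q, hq, rfl⟩
  -- each step realises at least half of the time that is still available
  have step : ∀ p : {p // r p₀ p}, ∃ q : {p // r p₀ p}, r p.1 q.1 ∧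
      (σ p.1 + p.1.2) / 2 ≤ q.1.2 := by
    rintro ⟨p, hp⟩
    rcases eq_or_lt_of_le (hσ p p hp (hrefl p)) with h | h
    · exact ⟨⟨p, hp⟩, hrefl p, by simp only; linarith⟩
    · have : (σ p + p.2) / 2 < sSup (Prod.snd '' {q | r p q}) := by
        change _ < σ p; linarith
      obtain ⟨_, ⟨q, hq, rfl⟩, hlt⟩ := exists_lt_of_lt_csSup (Set.Nonempty.image _ ⟨p, hrefl p⟩) this
      exact ⟨⟨q, htrans _ _ _ hp hq⟩, hq, hlt.le⟩
  choose g hg1 hg2 using step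
  let s : ℕ → {p // r p₀ p} := fun n => g^[n] ⟨p₀, hrefl p₀⟩
  have hs : ∀ n, s (n + 1) = g (s n) := fun n => Function.iterate_succ_apply' _ _ _
  have hr : ∀ n m, n ≤ m → r (s n).1 (s m).1 := by
    intro n m hnm
    induction m, hnm using Nat.le_induction with
    | base => exact hrefl _
    | succ m _ ih => rw [hs]; exact htrans _ _ _ ih (hg1 _)
  have hmono : Monotone (fun n => (s n).1.2) := fun n m hnm => by
    have := hdist _ _ (hr n m hnm)
    have := dist_nonneg (x := (s n).1.1) (y := (s m).1.1)
    simp only; linarith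
  have hbd : BddAbove (range fun n => (s n).1.2) := ⟨S, by
    rintro _ ⟨n, rfl⟩; exact hS _ (s n).2⟩
  have hlim := tendsto_atTop_ciSup hmono hbd
  set T := ⨆ n, (s n).1.2
  have hT : ∀ n, (s n).1.2 ≤ T := fun n => le_ciSup hbd n
  have hcau : CauchySeq (fun n => (s n).1.1) := by
    refine cauchySeq_of_le_tendsto_0' (fun n => T - (s n).1.2) ?_ ?_
    · intro n m hnm
      exact (hdist _ _ (hr n m hnm)).trans (by linarith [hT m])
    · simpa using (tendsto_const_nhds (x := T)).sub hlim
  obtain ⟨z, hz⟩ := cauchySeq_tendsto_of_complete hcau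
  have hp : Tendsto (fun n => (s n).1) atTop (𝓝 (z, T)) := by
    rw [nhds_prod_eq]; exact hz.prodMk hlim
  have hrz : ∀ n, r (s n).1 (z, T) := fun n =>
    (hclosed (s n).1).mem_of_tendsto hp (eventually_atTop.2 ⟨n, fun m hm => hr n m hm⟩)
  refine ⟨(z, T), hrz 0, fun q hq => ?_⟩
  have h1 : ∀ n, q.2 ≤ 2 * (s (n + 1)).1.2 - (s n).1.2 := fun n => by
    have h2 := hσ _ q (s n).2 (htrans _ _ _ (hrz n) hq)
    have h3 := hg2 (s n)
    rw [← hs] at h3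
    linarith
  have h2 : Tendsto (fun n => 2 * (s (n + 1)).1.2 - (s n).1.2) atTop (𝓝 (2 * T - T)) :=
    ((hlim.comp (tendsto_add_atTop_nat 1)).const_mul 2).sub hlim
  have := ge_of_tendsto' h2 h1
  simp only; linarith

/-- `w` is a robust descent direction for `N` at `x`: for all base points near `x`, all directions
near `w` and all small step lengths `τ ≥ 0`, the step lowers `N` by at least `β * τ` and changes
`H` by at most `C` times the decrease of `N`. Robustness in the direction is what makes
a continuous selection of such directions usable uniformly on compact sets. -/
def GoodDir {X : Type*} [NormedAddCommGroup X] [NormedSpace ℝ X] (N H : X → ℝ) (C β : ℝ)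
    (x w : X) : Prop :=
  ∀ᶠ p : X × X × ℝ in 𝓝 (x, w, 0), 0 ≤ p.2.2 →
    |H (p.1 + p.2.2 • p.2.1) - H p.1| ≤ C * (N p.1 - N (p.1 + p.2.2 • p.2.1)) ∧
    N (p.1 + p.2.2 • p.2.1) ≤ N p.1 - β * p.2.2

/-- A step along a convex combination splits into two consecutive steps along the two directions,
and both estimates are additive along consecutive steps. -/
theorem convex_goodDir {X : Type*} [NormedAddCommGroup X] [NormedSpace ℝ X] (N H : X → ℝ)
    (C β : ℝ) (x : X) : Convex ℝ {w | GoodDir N H C β x w} := by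
  intro w₁ h₁ w₂ h₂ θ₁ θ₂ hθ₁ hθ₂ hθ
  set w := θ₁ • w₁ + θ₂ • w₂ with hw
  have c₁ : Tendsto (fun p : X × X × ℝ => (p.1, p.2.1 - w + w₁, θ₁ * p.2.2))
      (𝓝 (x, w, 0)) (𝓝 (x, w₁, 0)) := by
    have : Continuous (fun p : X × X × ℝ => (p.1, p.2.1 - w + w₁, θ₁ * p.2.2)) := by fun_prop
    simpa using this.tendsto (x, w, 0)
  have c₂ : Tendsto (fun p : X × X × ℝ =>
      (p.1 + (θ₁ * p.2.2) • (p.2.1 - w + w₁), p.2.1 - w + w₂, θ₂ * p.2.2))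
      (𝓝 (x, w, 0)) (𝓝 (x, w₂, 0)) := by
    have : Continuous (fun p : X × X × ℝ =>
      (p.1 + (θ₁ * p.2.2) • (p.2.1 - w + w₁), p.2.1 - w + w₂, θ₂ * p.2.2)) := by fun_prop
    simpa using this.tendsto (x, w, 0)
  change ∀ᶠ p : X × X × ℝ in _, _
  filter_upwards [c₁.eventually h₁, c₂.eventually h₂]
  rintro ⟨z, v, τ⟩ g₁ g₂ (hτ : 0 ≤ τ)
  obtain ⟨a₁, b₁⟩ := g₁ (mul_nonneg hθ₁ hτ)
  obtain ⟨a₂, b₂⟩ := g₂ (mul_nonneg hθ₂ hτ)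
  simp only at a₁ b₁ a₂ b₂ ⊢
  have e : z + (θ₁ * τ) • (v - w + w₁) + (θ₂ * τ) • (v - w + w₂) = z + τ • v := by
    have e1 : (θ₁ * τ) • (v - w + w₁) + (θ₂ * τ) • (v - w + w₂) =
        ((θ₁ + θ₂) * τ) • (v - w) + τ • (θ₁ • w₁ + θ₂ • w₂) := by module
    rw [add_assoc, e1, hθ, ← hw]; module
  rw [e] at a₂ b₂
  constructor
  · have := abs_sub_le (H (z + τ • v)) (H (z + (θ₁ * τ) • (v - w + w₁))) (H z)
    linarith
  · have : β * (θ₁ * τ) + β * (θ₂ * τ) = β * τ := by rw [← mul_add, ← add_mul, hθ, one_mul]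
    linarith

/-- Descent of a compact family. If `N` has good directions at all points of `B` with
`b ≤ N ≤ M`, and `B` contains every point whose `H`-value is controlled by the decrease of `N`
along the family, then the family can be moved continuously below the level `a`, keeping the members
that start below level `b` fixed and controlling the variation of `H` by the decrease of `N`.

The pairs (family, time) are ordered so that during a time `τ` each member moves at most `τ` and
loses at least `β * τ` as long as it lies above `a`. A maximal pair exists, and a further step along
a continuous field of good directions, cut off between the levels `b` and `a`, contradicts
maximality. -/
theorem exists_descent_deformation {X K : Type*} [NormedAddCommGroup X] [NormedSpace ℝ X]
    [CompleteSpace X] [TopologicalSpace K] [CompactSpace K]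
    {N H : X → ℝ} (hN : Continuous N) (hH : Continuous H) {a b M C β : ℝ} (hab : b < a)
    (hβ : 0 < β) {B : Set X} (hBc : IsClosed B)
    (hloc : ∀ x ∈ B, b ≤ N x → N x ≤ M → ∃ w, ‖w‖ ≤ 1 ∧ GoodDir N H C β x w)
    (γ₀ : C(K, X)) (hM : ∀ t, N (γ₀ t) ≤ M)
    (hB : ∀ t z, |H z - H (γ₀ t)| ≤ C * (N (γ₀ t) - N z) → z ∈ B) :
    ∃ γ : C(K, X), ∀ t, N (γ t) ≤ a ∧ |H (γ t) - H (γ₀ t)| ≤ C * (N (γ₀ t) - N (γ t)) ∧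
      (N (γ₀ t) ≤ b → γ t = γ₀ t) := by
  -- a continuous field of good directions on the region
  let Ω : Set X := {x | x ∈ B ∧ b ≤ N x ∧ N x ≤ M}
  have hΩ : IsClosed Ω :=
    hBc.inter ((isClosed_le continuous_const hN).inter (isClosed_le hN continuous_const))
  obtain ⟨W, hW⟩ : ∃ W : C(X, X), ∀ x, W x ∈ {w | x ∈ Ω → ‖w‖ ≤ 1 ∧ GoodDir N H C β x w} := by
    refine exists_continuous_forall_mem_convex_of_local_const ?_ ?_
    · intro x
      by_cases hx : x ∈ Ω
      · simp only [hx, true_imp_iff]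
        have h1 : Convex ℝ {w : X | ‖w‖ ≤ 1} := by
          simpa [Metric.closedBall, dist_zero_right] using convex_closedBall (0 : X) 1
        exact h1.inter (convex_goodDir N H C β x)
      · simp [hx, convex_univ]
    · intro x
      by_cases hx : x ∈ Ω
      · obtain ⟨w, hw1, hw⟩ := hloc x hx.1 hx.2.1 hx.2.2
        refine ⟨w, ?_⟩
        have hc : Tendsto (fun z : X => (z, w, (0 : ℝ))) (𝓝 x) (𝓝 (x, w, 0)) := by
          have : Continuous (fun z : X => (z, w, (0 : ℝ))) := by fun_prop
          exact this.tendsto x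
        filter_upwards [hc.eventually hw.eventually_nhds] with z hz _
        exact ⟨hw1, hz⟩
      · refine ⟨0, ?_⟩
        filter_upwards [hΩ.isOpen_compl.mem_nhds hx] with z hz hz'
        exact absurd hz' hz
  let r : C(K, X) × ℝ → C(K, X) × ℝ → Prop := fun p q =>
    dist p.1 q.1 ≤ q.2 - p.2 ∧
    (∀ t, |H (q.1 t) - H (p.1 t)| ≤ C * (N (p.1 t) - N (q.1 t))) ∧
    (∀ t, N (p.1 t) ≤ b → q.1 t = p.1 t) ∧
    (∀ t, N (q.1 t) ≤ max a (N (p.1 t) - β * (q.2 - p.2))) ∧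
    (∀ t, N (q.1 t) ≤ N (p.1 t))
  have hrefl : ∀ p, r p p := fun p => ⟨by simp, by simp, by simp, by simp, by simp⟩
  have htrans : ∀ p q u, r p q → r q u → r p u := by
    rintro p q u ⟨p1, p2, p3, p4, p5⟩ ⟨q1, q2, q3, q4, q5⟩
    refine ⟨?_, fun t => ?_, fun t ht => ?_, fun t => ?_, fun t => (q5 t).trans (p5 t)⟩
    · linarith [dist_triangle p.1 q.1 u.1]
    · have := abs_sub_le (H (u.1 t)) (H (q.1 t)) (H (p.1 t))
      linarith [p2 t, q2 t]
    · rw [q3 t (by rw [p3 t ht]; exact ht), p3 t ht]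
    · have h0 : 0 ≤ u.2 - q.2 := dist_nonneg.trans q1
      have h1 := mul_nonneg hβ.le h0
      refine (q4 t).trans (max_le (le_max_left _ _) ?_)
      rcases le_max_iff.1 (p4 t) with h | h
      · exact le_max_of_le_left (by linarith)
      · exact le_max_of_le_right (by linarith)
  have hclosed : ∀ p, IsClosed {q | r p q} := by
    intro p
    have ev : ∀ t : K, Continuous fun q : C(K, X) × ℝ => q.1 t := fun t =>
      (continuous_eval_const t).comp continuous_fst
    have h1 : IsClosed {q : C(K, X) × ℝ | dist p.1 q.1 ≤ q.2 - p.2} :=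
      isClosed_le (by fun_prop) (by fun_prop)
    have h2 : IsClosed {q : C(K, X) × ℝ |
        ∀ t, |H (q.1 t) - H (p.1 t)| ≤ C * (N (p.1 t) - N (q.1 t))} := by
      simp only [ofPred_forall]
      exact isClosed_iInter fun t => isClosed_le (by fun_prop) (by fun_prop)
    have h3 : IsClosed {q : C(K, X) × ℝ | ∀ t, N (p.1 t) ≤ b → q.1 t = p.1 t} := by
      simp only [ofPred_forall]
      exact isClosed_iInter fun t => isClosed_iInter fun _ => isClosed_eq (ev t) continuous_const
    have h4 : IsClosed {q : C(K, X) × ℝ |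
        ∀ t, N (q.1 t) ≤ max a (N (p.1 t) - β * (q.2 - p.2))} := by
      simp only [ofPred_forall]
      exact isClosed_iInter fun t => isClosed_le (by fun_prop) (by fun_prop)
    have h5 : IsClosed {q : C(K, X) × ℝ | ∀ t, N (q.1 t) ≤ N (p.1 t)} := by
      simp only [ofPred_forall]
      exact isClosed_iInter fun t => isClosed_le (by fun_prop) (by fun_prop)
    exact h1.inter (h2.inter (h3.inter (h4.inter h5)))
  by_contra hcon
  -- as long as the goal is not reached, the elapsed time stays bounded
  have hnot : ∀ q, r (γ₀, 0) q → ¬ ∀ t, N (q.1 t) ≤ a := by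
    intro q hq hall
    exact hcon ⟨q.1, fun t => ⟨hall t, hq.2.1 t, hq.2.2.1 t⟩⟩
  obtain ⟨⟨γ, s⟩, hp, hmax⟩ := exists_maximal_time r hrefl htrans hclosed (fun p q h => h.1)
    (γ₀, 0) ((M - a) / β) (by
      intro q hq
      by_contra hlt
      push Not at hlt
      rw [div_lt_iff₀ hβ] at hlt
      refine hnot q hq fun t => (hq.2.2.2.1 t).trans (max_le le_rfl ?_)
      have := hM t
      simp only [sub_zero]
      linarith)
  have hγB : ∀ t, γ t ∈ B := fun t => hB t _ (hp.2.1 t)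
  have hγM : ∀ t, N (γ t) ≤ M := fun t => (hp.2.2.2.2 t).trans (hM t)
  let Kb : Set K := {t | b ≤ N (γ t)}
  have hKb : IsCompact Kb := (isClosed_le continuous_const (by fun_prop)).isCompact
  have hev : ∀ᶠ τ : ℝ in 𝓝 0, ∀ t ∈ Kb, 0 ≤ τ →
      |H (γ t + τ • W (γ t)) - H (γ t)| ≤ C * (N (γ t) - N (γ t + τ • W (γ t))) ∧
      N (γ t + τ • W (γ t)) ≤ N (γ t) - β * τ := by
    refine hKb.eventually_forall_of_forall_eventually fun t ht => ?_
    have hg := (hW (γ t) ⟨hγB t, ht, hγM t⟩).2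
    have hc : Continuous fun p : ℝ × K => (γ p.2, W (γ p.2), p.1) := by fun_prop
    exact (hc.tendsto (0, t)).eventually hg
  obtain ⟨τ₀, hτ₀, hball⟩ := Metric.eventually_nhds_iff.1 hev
  set τ := τ₀ / 2 with hτdef
  have hτ : 0 < τ := by positivity
  have hab' : 0 < a - b := sub_pos.2 hab
  let χ : K → ℝ := fun t => max 0 (min 1 ((N (γ t) - b) / (a - b)))
  have hχc : Continuous χ := by fun_prop
  have hχ0 : ∀ t, 0 ≤ χ t := fun t => le_max_left _ _
  have hχ1 : ∀ t, χ t ≤ 1 := fun t => max_le zero_le_one (min_le_left _ _)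
  have hχb : ∀ t, N (γ t) ≤ b → χ t = 0 := fun t ht =>
    max_eq_left ((min_le_right _ _).trans (div_nonpos_of_nonpos_of_nonneg (by linarith) hab'.le))
  have hχa : ∀ t, a ≤ N (γ t) → χ t = 1 := fun t ht => by
    have : (1 : ℝ) ≤ (N (γ t) - b) / (a - b) := by rw [le_div_iff₀ hab']; linarith
    simp only [χ, min_eq_left this]; norm_num
  let γ' : C(K, X) := ⟨fun t => γ t + (τ * χ t) • W (γ t), by fun_prop⟩
  have hγ' : ∀ t, γ' t = γ t + (τ * χ t) • W (γ t) := fun t => rfl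
  have hstep : ∀ t, b ≤ N (γ t) →
      |H (γ' t) - H (γ t)| ≤ C * (N (γ t) - N (γ' t)) ∧ N (γ' t) ≤ N (γ t) - β * (τ * χ t) := by
    intro t ht
    refine hball (y := τ * χ t) ?_ t ht (mul_nonneg hτ.le (hχ0 t))
    rw [Real.dist_eq, sub_zero, abs_of_nonneg (mul_nonneg hτ.le (hχ0 t))]
    have := mul_le_mul_of_nonneg_left (hχ1 t) hτ.le
    linarith
  have hfix : ∀ t, N (γ t) ≤ b → γ' t = γ t := fun t ht => by rw [hγ', hχb t ht]; simp
  have hdec : ∀ t, N (γ' t) ≤ N (γ t) := fun t => by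
    rcases le_total (N (γ t)) b with h | h
    · rw [hfix t h]
    · have := mul_nonneg hβ.le (mul_nonneg hτ.le (hχ0 t))
      linarith [(hstep t h).2]
  have hnew : r (γ, s) (γ', s + τ) := by
    refine ⟨?_, fun t => ?_, hfix, fun t => ?_, hdec⟩
    · simp only [add_sub_cancel_left]
      rw [ContinuousMap.dist_le hτ.le]
      intro t
      rcases le_total (N (γ t)) b with h | h
      · rw [hfix t h, dist_self]; exact hτ.le
      · have hw := (hW (γ t) ⟨hγB t, h, hγM t⟩).1
        rw [hγ', dist_self_add_right, norm_smul, Real.norm_of_nonneg (mul_nonneg hτ.le (hχ0 t))]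
        calc τ * χ t * ‖W (γ t)‖ ≤ τ * 1 * 1 := by
              gcongr
              exact hχ1 t
          _ = τ := by ring
    · rcases le_total (N (γ t)) b with h | h
      · simp [hfix t h]
      · exact (hstep t h).1
    · rcases le_total (N (γ t)) a with h | h
      · exact le_max_of_le_left ((hdec t).trans h)
      · have := (hstep t (hab.le.trans h)).2
        rw [hχa t h] at this
        refine le_max_of_le_right ?_
        simp only [add_sub_cancel_left]
        linarith
  have := hmax _ hnew
  simp only at this
  linarith

/-! ### The Palais–Smale condition gives uniform descent -/

/-- Hahn–Banach for the seminorm `k ↦ inf_v (‖k + A v‖ + μ ‖v‖)`, which is at most `‖k‖`, is at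
most `μ ‖v‖` at `A v`, and by hypothesis is at least `‖u‖` at `u`. -/
theorem exists_norming_functional {X Y : Type*} [NormedAddCommGroup X] [NormedSpace ℝ X]
    [NormedAddCommGroup Y] [NormedSpace ℝ Y] (A : X →L[ℝ] Y) {u : Y} (hu : u ≠ 0) {μ : ℝ}
    (hμ : 0 ≤ μ) (hA : ∀ v, ‖u‖ - μ * ‖v‖ ≤ ‖u + A v‖) :
    ∃ φ : Y →L[ℝ] ℝ, φ u = ‖u‖ ∧ (∀ k, φ k ≤ ‖k‖) ∧ ‖φ.comp A‖ ≤ μ := by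
  let q : Y → ℝ := fun k => ⨅ v : X, (‖k + A v‖ + μ * ‖v‖)
  have hpos : ∀ k v, 0 ≤ ‖k + A v‖ + μ * ‖v‖ := fun k v => by positivity
  have hbdd : ∀ k, BddBelow (range fun v : X => ‖k + A v‖ + μ * ‖v‖) := fun k =>
    ⟨0, by rintro _ ⟨v, rfl⟩; exact hpos k v⟩
  have hq : ∀ k v, q k ≤ ‖k + A v‖ + μ * ‖v‖ := fun k v => ciInf_le (hbdd k) v
  have hq0 : ∀ k, 0 ≤ q k := fun k => le_ciInf (hpos k)
  have hqu : ‖u‖ ≤ q u := le_ciInf fun v => by linarith [hA v]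
  have hhom_le : ∀ c : ℝ, 0 < c → ∀ k, q (c • k) ≤ c * q k := by
    intro c hc k
    rw [← div_le_iff₀' hc]
    refine le_ciInf fun v => ?_
    rw [div_le_iff₀' hc]
    refine (hq _ (c • v)).trans (le_of_eq ?_)
    rw [map_smul, ← smul_add, norm_smul, norm_smul, Real.norm_of_nonneg hc.le]
    ring
  have hhom : ∀ c : ℝ, 0 < c → ∀ k, q (c • k) = c * q k := by
    intro c hc k
    refine le_antisymm (hhom_le c hc k) ?_
    have := hhom_le c⁻¹ (inv_pos.2 hc) (c • k)
    rw [inv_smul_smul₀ hc.ne', inv_mul_eq_div, le_div_iff₀' hc] at this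
    exact this
  have hadd : ∀ k l, q (k + l) ≤ q k + q l := by
    intro k l
    refine le_ciInf_add_ciInf fun v w => ?_
    refine (hq _ (v + w)).trans ?_
    have h1 : k + l + A (v + w) = (k + A v) + (l + A w) := by rw [map_add]; abel
    have h2 := norm_add_le (k + A v) (l + A w)
    have h3 := mul_le_mul_of_nonneg_left (norm_add_le v w) hμ
    rw [h1]
    linarith
  obtain ⟨g, hg1, hg2⟩ := exists_extension_of_le_sublinear
    (LinearPMap.mkSpanSingleton (K := ℝ) u ‖u‖ hu) q hhom hadd (by
      rintro ⟨k, hk⟩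
      obtain ⟨c, rfl⟩ := Submodule.mem_span_singleton.1 hk
      have hval : LinearPMap.mkSpanSingleton (K := ℝ) u ‖u‖ hu ⟨c • u, hk⟩ = c * ‖u‖ :=
        LinearPMap.mkSpanSingleton'_apply (R := ℝ) u ‖u‖ _ c hk
      rw [hval]
      rcases le_or_gt c 0 with hc | hc
      · exact (mul_nonpos_of_nonpos_of_nonneg hc (norm_nonneg _)).trans (hq0 _)
      · simp only [hhom c hc]
        exact mul_le_mul_of_nonneg_left hqu hc.le)
  have hgn : ∀ k, g k ≤ ‖k‖ := fun k => (hg2 k).trans (by simpa using hq k 0)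
  have habs : ∀ k, ‖g k‖ ≤ 1 * ‖k‖ := fun k => by
    rw [Real.norm_eq_abs, one_mul, abs_le]
    have := hgn (-k)
    rw [map_neg, norm_neg] at this
    exact ⟨by linarith, hgn k⟩
  have hgA : ∀ v, g (A v) ≤ μ * ‖v‖ := fun v =>
    (hg2 _).trans (by simpa using hq (A v) (-v))
  refine ⟨g.mkContinuous 1 habs, ?_, hgn, ContinuousLinearMap.opNorm_le_bound _ hμ fun v => ?_⟩
  · have := hg1 ⟨u, Submodule.mem_span_singleton_self u⟩
    simp only [LinearMap.mkContinuous_apply]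
    rw [this]
    exact LinearPMap.mkSpanSingleton_apply ℝ ℝ hu ‖u‖
  · simp only [ContinuousLinearMap.comp_apply, LinearMap.mkContinuous_apply, Real.norm_eq_abs,
      abs_le]
    have := hgA (-v)
    rw [map_neg, map_neg, norm_neg] at this
    exact ⟨by linarith, hgA v⟩

/-- A functional `φ` norming `f x - y` yields the element `‖f x - y‖ • φ ∘ A` of the Clarke
gradient of `½‖f - y‖²` at `x`. -/
theorem smul_comp_mem_clarkeSubdiff {X Y : Type*} [NormedAddCommGroup X] [NormedSpace ℝ X]
    [NormedAddCommGroup Y] [NormedSpace ℝ Y] {f : X → Y} {A : X →L[ℝ] Y} {x : X}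
    (hf : HasStrictFDerivAt f A x) (y : Y) {φ : Y →L[ℝ] ℝ} (hφ : φ (f x - y) = ‖f x - y‖)
    (hφ' : ∀ k, φ k ≤ ‖k‖) :
    ‖f x - y‖ • φ.comp A ∈ clarkeSubdiff (fun x => (1 / 2 : ℝ) * ‖f x - y‖ ^ 2) x := by
  intro v
  set l : Filter (X × ℝ) := 𝓝 (0 : X) ×ˢ 𝓝[>] (0 : ℝ)
  set Q : X × ℝ → ℝ := fun p => ((1 / 2 : ℝ) * ‖f (x + p.1 + p.2 • v) - y‖ ^ 2 -
    (1 / 2 : ℝ) * ‖f (x + p.1) - y‖ ^ 2) / p.2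
  change ‖f x - y‖ * φ (A v) ≤ limsup Q l
  -- the quotients are bounded since `f` is Lipschitz near `x`
  have hb : IsBoundedUnder (· ≤ ·) l Q := by
    obtain ⟨L, s, hs, hL⟩ := hf.exists_lipschitzOnWith
    have hle : l ≤ 𝓝 ((0 : X), (0 : ℝ)) := by
      rw [nhds_prod_eq]; exact Filter.prod_mono le_rfl nhdsWithin_le_nhds
    have t1 : Tendsto (fun p : X × ℝ => x + p.1) l (𝓝 x) := by
      have : Continuous fun p : X × ℝ => x + p.1 := by fun_prop
      simpa using (this.tendsto (0, 0)).mono_left hle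
    have t2 : Tendsto (fun p : X × ℝ => x + p.1 + p.2 • v) l (𝓝 x) := by
      have : Continuous fun p : X × ℝ => x + p.1 + p.2 • v := by fun_prop
      simpa using (this.tendsto (0, 0)).mono_left hle
    have hn : ∀ᶠ z in 𝓝 x, ‖f z - y‖ ≤ ‖f x - y‖ + 1 :=
      (hf.continuousAt.tendsto.sub_const y).norm.eventually_le_const (by linarith)
    have hpos : ∀ᶠ p : X × ℝ in l, 0 < p.2 :=
      (tendsto_snd (f := 𝓝 (0 : X))).eventually self_mem_nhdsWithin
    refine ⟨(‖f x - y‖ + 1) * (L * ‖v‖), ?_⟩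
    rw [eventually_map]
    filter_upwards [t1.eventually hn, t2.eventually hn, t1.eventually hs, t2.eventually hs, hpos]
      with p h1 h2 h3 h4 h5
    have h6 : ‖f (x + p.1 + p.2 • v) - f (x + p.1)‖ ≤ L * (p.2 * ‖v‖) := by
      have := hL.norm_sub_le h4 h3
      rwa [add_sub_cancel_left, norm_smul, Real.norm_of_nonneg h5.le] at this
    simp only [Q]
    rw [div_le_iff₀ h5]
    have h7 : ‖f (x + p.1 + p.2 • v) - y‖ - ‖f (x + p.1) - y‖ ≤ L * (p.2 * ‖v‖) := by
      refine (norm_sub_norm_le _ _).trans ?_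
      rwa [sub_sub_sub_cancel_right]
    have h8 : 0 ≤ L * (p.2 * ‖v‖) := by positivity
    nlinarith [norm_nonneg (f (x + p.1 + p.2 • v) - y), norm_nonneg (f (x + p.1) - y),
      mul_le_mul_of_nonneg_right h7 (add_nonneg (norm_nonneg (f (x + p.1 + p.2 • v) - y))
        (norm_nonneg (f (x + p.1) - y))),
      mul_le_mul_of_nonneg_right h1 h8, mul_le_mul_of_nonneg_right h2 h8]
  refine le_of_forall_lt_imp_le_of_dense fun c hc => ?_
  refine le_limsup_of_frequently_le ?_ hb
  -- along `h = 0` the quotients dominate difference quotients of `‖f x - y‖ • φ ∘ f`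
  have hd : Tendsto (fun t : ℝ => ‖f x - y‖ * φ (t⁻¹ • (f (x + t • v) - f x))) (𝓝[>] 0)
      (𝓝 (‖f x - y‖ * φ (A v))) := by
    refine Tendsto.const_mul _ ((φ.continuous.tendsto _).comp ?_)
    have h1 : HasDerivAt (fun t : ℝ => f (x + t • v)) (A v) 0 := by
      have := hf.hasFDerivAt.hasLineDerivAt v
      exact this
    have h2 := hasDerivAt_iff_tendsto_slope.1 h1
    have h3 := h2.mono_left (nhdsWithin_mono (0 : ℝ) (fun t (ht : 0 < t) => ht.ne'))
    refine h3.congr fun t => ?_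
    simp [slope]
  have he : ∀ᶠ t in 𝓝[>] (0 : ℝ), c ≤ Q (0, t) := by
    filter_upwards [hd.eventually_const_le hc, self_mem_nhdsWithin] with t ht (ht0 : 0 < t)
    refine ht.trans ?_
    simp only [Q, add_zero]
    rw [le_div_iff₀ ht0, map_smul, smul_eq_mul]
    have h1 : φ (f (x + t • v) - f x) ≤ ‖f (x + t • v) - y‖ - ‖f x - y‖ := by
      have := hφ' (f (x + t • v) - y)
      have e : f (x + t • v) - f x = (f (x + t • v) - y) - (f x - y) := by abel
      rw [e, map_sub, hφ]
      linarith
    have h2 : ‖f x - y‖ * (t⁻¹ * φ (f (x + t • v) - f x)) * t =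
        ‖f x - y‖ * φ (f (x + t • v) - f x) := by field_simp
    rw [h2]
    nlinarith [mul_le_mul_of_nonneg_left h1 (norm_nonneg (f x - y)),
      sq_nonneg (‖f (x + t • v) - y‖ - ‖f x - y‖)]
  intro hne
  have h1 := hne.curry
  have h2 := h1.self_of_nhds
  obtain ⟨t, h3, h4⟩ := (h2.and he).exists
  exact h3 h4

/-- On the region `b ≤ ‖f - y‖ ≤ M`, the weighted Palais–Smale condition for `½‖f - y‖²` gives
linearised descent at the rate `κ / (1 + h ‖x‖)` with a single `κ`. Otherwise there are points whose
Clarke gradient contains elements of small weighted norm; at a limit point `z` of these,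
the direction `-(f' z)⁻¹ (f z - y)` forces `f z = y`. -/
theorem exists_uniform_descent {X Y : Type*} [NormedAddCommGroup X] [NormedSpace ℝ X]
    [NormedAddCommGroup Y] [NormedSpace ℝ Y]
    {f : X → Y} {f' : X → X ≃L[ℝ] Y} (hC1 : ContDiff ℝ 1 f)
    (hdf : ∀ x : X, HasFDerivAt f (f' x : X →L[ℝ] Y) x)
    {h : ℝ → ℝ} (hnonneg : ∀ t ∈ Set.Ici (0:ℝ), 0 ≤ h t) {y : Y}
    (hPS : WeightedChangPS (fun x => (1/2 : ℝ) * ‖f x - y‖ ^ 2) h) {b : ℝ} (M : ℝ)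
    (hb : 0 < b ∨ ∀ x, f x ≠ y) :
    ∃ κ > 0, ∀ x, b ≤ ‖f x - y‖ → ‖f x - y‖ ≤ M →
      ∃ v, ‖f x - y + f' x v‖ < ‖f x - y‖ - κ / (1 + h ‖x‖) * ‖v‖ := by
  by_contra hcon
  push Not at hcon
  have hh : ∀ x : X, 0 < 1 + h ‖x‖ := fun x => by
    linarith [hnonneg ‖x‖ (norm_nonneg x)]
  have hstrict : ∀ x, HasStrictFDerivAt f (f' x : X →L[ℝ] Y) x := fun x =>
    hC1.contDiffAt.hasStrictFDerivAt' (hdf x) one_ne_zero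
  have hε : ∀ n : ℕ, (0 : ℝ) < 1 / (n + 1) := fun n => by positivity
  choose x hx1 hx2 hx3 using fun n : ℕ => hcon (1 / (n + 1)) (hε n)
  have hne : ∀ n, f (x n) - y ≠ 0 := fun n => by
    rcases hb with hb | hb
    · exact norm_pos_iff.1 (hb.trans_le (hx1 n))
    · exact sub_ne_zero.2 (hb _)
  have hlam0 : ∀ n, 0 ≤ lambdaF (fun x => (1/2 : ℝ) * ‖f x - y‖ ^ 2) (x n) := fun n =>
    Real.sInf_nonneg (by rintro _ ⟨w, _, rfl⟩; exact norm_nonneg w)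
  have hlam : ∀ n, lambdaF (fun x => (1/2 : ℝ) * ‖f x - y‖ ^ 2) (x n) * (1 + h ‖x n‖) ≤
      M * (1 / (n + 1)) := by
    intro n
    have hμ : 0 ≤ 1 / ((n : ℝ) + 1) / (1 + h ‖x n‖) := div_nonneg (hε n).le (hh _).le
    obtain ⟨φ, p1, p2, p3⟩ := exists_norming_functional (f' (x n) : X →L[ℝ] Y) (hne n) hμ (hx3 n)
    have hmem := smul_comp_mem_clarkeSubdiff (hstrict (x n)) y p1 p2
    have h1 : lambdaF (fun x => (1/2 : ℝ) * ‖f x - y‖ ^ 2) (x n) ≤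
        M * (1 / ((n : ℝ) + 1) / (1 + h ‖x n‖)) := by
      refine (csInf_le ⟨0, ?_⟩ (mem_image_of_mem _ hmem)).trans ?_
      · rintro _ ⟨w, _, rfl⟩; exact norm_nonneg w
      · simp only [norm_smul, norm_norm]
        exact mul_le_mul (hx2 n) p3 (norm_nonneg _) ((norm_nonneg _).trans (hx2 n))
    calc _ ≤ M * (1 / ((n : ℝ) + 1) / (1 + h ‖x n‖)) * (1 + h ‖x n‖) :=
          mul_le_mul_of_nonneg_right h1 (hh _).le
      _ = _ := by rw [mul_assoc, div_mul_cancel₀ _ (hh _).ne']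
  have hε0 : Tendsto (fun n : ℕ => 1 / ((n : ℝ) + 1)) atTop (𝓝 0) :=
    tendsto_one_div_add_atTop_nhds_zero_nat
  obtain ⟨z, ψ, hψ, hz⟩ := hPS x ⟨1 / 2 * M ^ 2, fun n => by
      rw [abs_of_nonneg (by positivity)]
      have := pow_le_pow_left₀ (norm_nonneg _) (hx2 n) 2
      linarith⟩
    (squeeze_zero (fun n => mul_nonneg (hlam0 n) (hh _).le) hlam
      (by simpa using hε0.const_mul M))
  have hfz : Tendsto (fun n => f (x (ψ n)) - y) atTop (𝓝 (f z - y)) :=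
    ((hC1.continuous.tendsto z).comp hz).sub_const y
  -- the Newton direction at the limit point, tested along the sequence
  set v : X := -(f' z).symm (f z - y) with hv
  have hdz : Tendsto (fun n => f' (x (ψ n)) v) atTop (𝓝 (f' z v)) := by
    have hc : Continuous fun w => fderiv ℝ f w v :=
      (hC1.continuous_fderiv one_ne_zero).clm_apply continuous_const
    have := (hc.tendsto z).comp hz
    simpa only [Function.comp_def, (hdf _).fderiv, ContinuousLinearEquiv.coe_coe] using this
  have hfv : f' z v = -(f z - y) := by rw [hv, map_neg, ContinuousLinearEquiv.apply_symm_apply]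
  have hR : Tendsto (fun n => ‖f (x (ψ n)) - y + f' (x (ψ n)) v‖) atTop (𝓝 0) := by
    have := (hfz.add hdz).norm
    rwa [hfv, add_neg_cancel, norm_zero] at this
  have hLb : Tendsto (fun n => ‖f (x (ψ n)) - y‖ - 1 / ((ψ n : ℝ) + 1) * ‖v‖) atTop
      (𝓝 (‖f z - y‖)) := by
    have := hfz.norm.sub ((hε0.comp hψ.tendsto_atTop).mul_const ‖v‖)
    simpa using this
  have hle : ‖f z - y‖ ≤ 0 := by
    refine le_of_tendsto_of_tendsto' hLb hR fun n => le_trans ?_ (hx3 (ψ n) v)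
    have : 1 / ((ψ n : ℝ) + 1) / (1 + h ‖x (ψ n)‖) ≤ 1 / ((ψ n : ℝ) + 1) :=
      div_le_self (hε _).le (by linarith [hnonneg _ (norm_nonneg (x (ψ n)))])
    have := mul_le_mul_of_nonneg_right this (norm_nonneg v)
    linarith
  rcases hb with hb | hb
  · have : b ≤ ‖f z - y‖ := ge_of_tendsto' hfz.norm fun n => hx1 _
    linarith
  · exact hb z (sub_eq_zero.1 (norm_le_zero_iff.1 hle))

/-- A linearised descent direction at `x`, once normalised, is a robust descent direction, because
`f` is strictly differentiable and the norm is convex. -/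
theorem exists_goodDir {X Y : Type*} [NormedAddCommGroup X] [NormedSpace ℝ X]
    [NormedAddCommGroup Y] [NormedSpace ℝ Y] {f : X → Y} {A : X →L[ℝ] Y} {x v : X}
    (hf : HasStrictFDerivAt f A x) {y : Y} {H : X → ℝ} {μ Λ C β : ℝ}
    (hv : ‖f x - y + A v‖ < ‖f x - y‖ - μ * ‖v‖) (hΛ : 0 ≤ Λ) (hC : 0 ≤ C)
    (hCμ : 2 * Λ ≤ C * μ) (hβ : β ≤ μ)
    (hH : ∃ s ∈ 𝓝 x, ∀ z ∈ s, ∀ z' ∈ s, |H z - H z'| ≤ Λ * ‖z - z'‖) :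
    ∃ w, ‖w‖ ≤ 1 ∧ GoodDir (fun x => ‖f x - y‖) H C β x w := by
  have hv0 : v ≠ 0 := by rintro rfl; simp at hv
  set r := ‖v‖ with hr
  have hr0 : 0 < r := norm_pos_iff.2 hv0
  obtain ⟨w, hw⟩ : ∃ w, w = r⁻¹ • v := ⟨_, rfl⟩
  have hrw : r • w = v := by rw [hw, smul_inv_smul₀ hr0.ne']
  have hw1 : ‖w‖ = 1 := by
    rw [hw, norm_smul, norm_inv, Real.norm_of_nonneg hr0.le, inv_mul_cancel₀ hr0.ne']
  refine ⟨w, hw1.le, ?_⟩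
  set ε := (‖f x - y‖ - μ * r - ‖f x - y + A v‖) / (4 * r) with hεdef
  have hε : 0 < ε := div_pos (by linarith) (by positivity)
  have hε' : ‖f x - y + A (r • w)‖ + 2 * ε * r < ‖f x - y‖ - μ * r := by
    have : 4 * (ε * r) = ‖f x - y‖ - μ * r - ‖f x - y + A v‖ := by
      rw [hεdef]; field_simp
    have h2 := mul_pos hε hr0
    rw [hrw]; linarith
  obtain ⟨s, hs, hHs⟩ := hH
  have tfst : Tendsto (fun p : X × X × ℝ => p.1) (𝓝 (x, w, 0)) (𝓝 x) :=
    continuous_fst.tendsto _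
  have tend : Tendsto (fun p : X × X × ℝ => p.1 + p.2.2 • p.2.1) (𝓝 (x, w, 0)) (𝓝 x) := by
    have : Continuous fun p : X × X × ℝ => p.1 + p.2.2 • p.2.1 := by fun_prop
    simpa using this.tendsto (x, w, 0)
  have e1 : ∀ᶠ p : X × X × ℝ in 𝓝 (x, w, 0),
      ‖f (p.1 + p.2.2 • p.2.1) - f p.1 - A (p.1 + p.2.2 • p.2.1 - p.1)‖ ≤
        ε * ‖p.1 + p.2.2 • p.2.1 - p.1‖ :=
    (tend.prodMk_nhds tfst).eventually (hf.isLittleO.def hε)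
  have e2 : ∀ᶠ p : X × X × ℝ in 𝓝 (x, w, 0),
      ‖f p.1 - y + A (r • p.2.1)‖ + 2 * ε * r < ‖f p.1 - y‖ - μ * r := by
    have tf : Tendsto (fun p : X × X × ℝ => f p.1 - y) (𝓝 (x, w, 0)) (𝓝 (f x - y)) :=
      (hf.continuousAt.tendsto.comp tfst).sub_const y
    have tA : Tendsto (fun p : X × X × ℝ => A (r • p.2.1)) (𝓝 (x, w, 0)) (𝓝 (A (r • w))) := by
      have : Continuous fun p : X × X × ℝ => A (r • p.2.1) := by fun_prop
      exact this.tendsto (x, w, 0)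
    exact ((tf.add tA).norm.add_const _).eventually_lt (tf.norm.sub_const _) hε'
  have e3 : ∀ᶠ p : X × X × ℝ in 𝓝 (x, w, 0), ‖p.2.1‖ < 2 := by
    have : Continuous fun p : X × X × ℝ => ‖p.2.1‖ := by fun_prop
    exact (this.tendsto (x, w, 0)).eventually_lt_const (by simp only [hw1]; norm_num)
  have e4 : ∀ᶠ p : X × X × ℝ in 𝓝 (x, w, 0), p.2.2 < r := by
    have : Continuous fun p : X × X × ℝ => p.2.2 := by fun_prop
    exact (this.tendsto (x, w, 0)).eventually_lt_const hr0
  change ∀ᶠ p : X × X × ℝ in _, _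
  filter_upwards [e1, e2, e3, e4, tfst.eventually hs, tend.eventually hs]
  rintro ⟨z, w', τ⟩ g1 g2 g3 g4 g5 g6 (hτ : 0 ≤ τ)
  simp only [add_sub_cancel_left] at g1 g2 g3 g4 g5 g6 ⊢
  have hn : ‖τ • w'‖ ≤ 2 * τ := by
    rw [norm_smul, Real.norm_of_nonneg hτ]; nlinarith
  -- `f (z + τ w')` is close to a convex combination of `f z` and `f z + A (r w')`
  set t := τ / r with ht
  have htr : t * r = τ := by rw [ht]; field_simp
  have ht0 : 0 ≤ t := div_nonneg hτ hr0.le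
  have ht1 : t ≤ 1 := (div_le_one hr0).2 g4.le
  have hdec : ‖f (z + τ • w') - y‖ ≤ ‖f z - y‖ - μ * τ := by
    have e : f (z + τ • w') - y = (1 - t) • (f z - y) + t • (f z - y + A (r • w')) +
        (f (z + τ • w') - f z - A (τ • w')) := by
      have : A (τ • w') = t • A (r • w') := by rw [← map_smul, smul_smul, htr]
      rw [this]; module
    have k1 := norm_add₃_le (a := (1 - t) • (f z - y)) (b := t • (f z - y + A (r • w')))
      (c := f (z + τ • w') - f z - A (τ • w'))
    rw [← e, norm_smul, norm_smul, Real.norm_of_nonneg ht0,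
      Real.norm_of_nonneg (sub_nonneg.2 ht1)] at k1
    have k2 := mul_le_mul_of_nonneg_left hn hε.le
    have k3 := mul_le_mul_of_nonneg_left g2.le ht0
    have k4 : t * (‖f z - y + A (r • w')‖ + 2 * ε * r) =
        t * ‖f z - y + A (r • w')‖ + 2 * ε * τ := by rw [← htr]; ring
    have k5 : t * (‖f z - y‖ - μ * r) = t * ‖f z - y‖ - μ * τ := by rw [← htr]; ring
    linarith
  constructor
  · have k1 := hHs _ g6 _ g5
    rw [add_sub_cancel_left] at k1
    have k2 := mul_le_mul_of_nonneg_left hn hΛ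
    have k3 := mul_le_mul_of_nonneg_right hCμ hτ
    have k4 := mul_le_mul_of_nonneg_left hdec hC
    linarith
  · have := mul_le_mul_of_nonneg_right hβ hτ
    linarith

/-! ### The weight and the resulting deformations -/

/-- The function `H r = ∫₀ʳ dρ / (1 + h ρ)`: it is locally Lipschitz with constant twice the
density, and its sublevel sets are bounded above since the integral diverges. -/
theorem exists_weight_primitive {h : ℝ → ℝ} (hcont : ContinuousOn h (Set.Ici 0))
    (hnonneg : ∀ t ∈ Set.Ici (0:ℝ), 0 ≤ h t)
    (hint : ∫⁻ ρ in Set.Ioi (0:ℝ), ENNReal.ofReal (1 / (1 + h ρ)) = ⊤) :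
    ∃ H : ℝ → ℝ, Continuous H ∧
      (∀ r, 0 ≤ r → ∃ s ∈ 𝓝 r, ∀ p ∈ s, ∀ q ∈ s, |H p - H q| ≤ 2 / (1 + h r) * |p - q|) ∧
      ∀ B, ∃ R, 0 ≤ R ∧ ∀ r, H r ≤ B → r ≤ R := by
  -- the density, extended to negative arguments by its value at `0`
  let k : ℝ → ℝ := fun ρ => 1 / (1 + h (max ρ 0))
  have hpos : ∀ ρ, 0 < 1 + h (max ρ 0) := fun ρ => by
    linarith [hnonneg (max ρ 0) (mem_Ici.2 (le_max_right _ _))]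
  have hkpos : ∀ ρ, 0 < k ρ := fun ρ => one_div_pos.2 (hpos ρ)
  have hhc : Continuous fun ρ => h (max ρ 0) :=
    hcont.comp_continuous (by fun_prop) fun ρ => mem_Ici.2 (le_max_right _ _)
  have hk : Continuous k :=
    continuous_const.div (continuous_const.add hhc) fun ρ => (hpos ρ).ne'
  have hkr : ∀ r, 0 ≤ r → k r = 1 / (1 + h r) := fun r hr => by simp only [k, max_eq_left hr]
  have hii : ∀ p q, IntervalIntegrable k MeasureTheory.volume p q := fun p q =>
    hk.intervalIntegrable p q
  have hder : ∀ r, HasStrictDerivAt (fun u => ∫ ρ in (0:ℝ)..u, k ρ) (k r) r := fun r =>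
    hk.integral_hasStrictDerivAt 0 r
  have hmono : Monotone fun u => ∫ ρ in (0:ℝ)..u, k ρ := by
    intro p q hpq
    have := intervalIntegral.integral_nonneg (μ := MeasureTheory.volume) hpq
      fun ρ _ => (hkpos ρ).le
    have h2 := intervalIntegral.integral_add_adjacent_intervals (hii 0 p) (hii p q)
    simp only; linarith
  refine ⟨fun u => ∫ ρ in (0:ℝ)..u, k ρ, ?_, ?_, ?_⟩
  · exact continuous_iff_continuousAt.2 fun r => (hder r).hasDerivAt.continuousAt
  · intro r hr
    have hlt : ‖ContinuousLinearMap.toSpanSingleton ℝ (k r)‖₊ < (2 * k r).toNNReal := by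
      rw [← NNReal.coe_lt_coe, coe_nnnorm, ContinuousLinearMap.norm_toSpanSingleton,
        Real.norm_of_nonneg (hkpos r).le, Real.coe_toNNReal _ (by linarith [hkpos r])]
      linarith [hkpos r]
    obtain ⟨s, hs, hL⟩ := (hder r).hasStrictFDerivAt.exists_lipschitzOnWith_of_nnnorm_lt _ hlt
    refine ⟨s, hs, fun p hp q hq => ?_⟩
    have := hL.norm_sub_le hp hq
    rw [Real.coe_toNNReal _ (by linarith [hkpos r]), hkr r hr, mul_one_div] at this
    exact this
  · intro B
    by_contra hcon
    push Not at hcon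
    have hbd : ∀ u, ∫ ρ in (0:ℝ)..u, k ρ ≤ B := fun u => by
      obtain ⟨r, hr1, hr2⟩ := hcon (max u 0) (le_max_right _ _)
      exact (hmono ((le_max_left u 0).trans hr2.le)).trans hr1
    have hI : MeasureTheory.IntegrableOn k (Ioi 0) :=
      MeasureTheory.integrableOn_Ioi_of_intervalIntegral_norm_bounded (l := atTop) (b := id) B 0
        (fun i => hk.integrableOn_Ioc) tendsto_id (Eventually.of_forall fun u => by
          simpa only [Real.norm_of_nonneg (hkpos _).le, id] using hbd u)
    have hfin := hI.lintegral_lt_top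
    refine hfin.ne ?_
    rw [← hint]
    refine MeasureTheory.setLIntegral_congr_fun measurableSet_Ioi fun ρ hρ => ?_
    simp only [hkr ρ (le_of_lt hρ)]

/-- Compact families in `{‖f - y‖ ≤ M}` can be deformed into `{‖f - y‖ ≤ a}`. The constant `C`
depends neither on the family nor on the parameter space. For a given family, the
control of `H ‖·‖` confines the deformation to a ball, on which the descent rate is bounded
below. -/
theorem exists_uniform_deformation {X Y : Type*} [NormedAddCommGroup X] [NormedSpace ℝ X]
    [CompleteSpace X] [NormedAddCommGroup Y] [NormedSpace ℝ Y]
    {f : X → Y} {f' : X → X ≃L[ℝ] Y} (hC1 : ContDiff ℝ 1 f)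
    (hdf : ∀ x : X, HasFDerivAt f (f' x : X →L[ℝ] Y) x)
    {h H : ℝ → ℝ} (hnonneg : ∀ t ∈ Set.Ici (0:ℝ), 0 ≤ h t)
    (hmono : MonotoneOn h (Set.Ici 0)) (hHc : Continuous H)
    (hHl : ∀ r, 0 ≤ r → ∃ s ∈ 𝓝 r, ∀ p ∈ s, ∀ q ∈ s, |H p - H q| ≤ 2 / (1 + h r) * |p - q|)
    (hHB : ∀ B, ∃ R, 0 ≤ R ∧ ∀ r, H r ≤ B → r ≤ R) {y : Y}
    (hPS : WeightedChangPS (fun x => (1/2 : ℝ) * ‖f x - y‖ ^ 2) h) {a b : ℝ} (hab : b < a)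
    (M : ℝ) (hb : 0 < b ∨ ∀ x, f x ≠ y) :
    ∃ C ≥ 0, ∀ (K : Type) [TopologicalSpace K] [CompactSpace K] (γ₀ : C(K, X)),
      (∀ t, ‖f (γ₀ t) - y‖ ≤ M) → ∃ γ : C(K, X), ∀ t, ‖f (γ t) - y‖ ≤ a ∧
        |H ‖γ t‖ - H ‖γ₀ t‖| ≤ C * (‖f (γ₀ t) - y‖ - ‖f (γ t) - y‖) ∧
        (‖f (γ₀ t) - y‖ ≤ b → γ t = γ₀ t) := by
  obtain ⟨κ, hκ, hdesc⟩ := exists_uniform_descent hC1 hdf hnonneg hPS M hb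
  have hC : 0 ≤ 4 / κ := by positivity
  refine ⟨4 / κ, hC, fun K _ _ γ₀ hM => ?_⟩
  have hfc := hC1.continuous
  obtain ⟨D, hD⟩ := (isCompact_range (f := fun t => H ‖γ₀ t‖) (by fun_prop)).bddAbove
  have hD' : ∀ t, H ‖γ₀ t‖ ≤ D := fun t => hD ⟨t, rfl⟩
  obtain ⟨R, hR0, hR⟩ := hHB (D + 4 / κ * M)
  have hh : ∀ r, 0 ≤ r → 0 < 1 + h r := fun r hr => by linarith [hnonneg r hr]
  refine exists_descent_deformation (N := fun x => ‖f x - y‖) (H := fun x => H ‖x‖)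
    (B := {x | H ‖x‖ ≤ D + 4 / κ * M}) (β := κ / (1 + h R)) (M := M)
    (by fun_prop) (by fun_prop) hab (div_pos hκ (hh R hR0))
    (isClosed_le (by fun_prop) continuous_const) ?_ γ₀ hM ?_
  · intro x hxB hbx hxM
    obtain ⟨v, hv⟩ := hdesc x hbx hxM
    have hx0 := hh ‖x‖ (norm_nonneg x)
    refine exists_goodDir (hC1.contDiffAt.hasStrictFDerivAt' (hdf x) one_ne_zero) hv
      (Λ := 2 / (1 + h ‖x‖)) (div_nonneg zero_le_two hx0.le) hC (le_of_eq ?_) ?_ ?_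
    · field_simp; norm_num
    · refine div_le_div_of_nonneg_left hκ.le hx0 ?_
      have := hmono (norm_nonneg x) hR0 (hR _ hxB)
      linarith
    · obtain ⟨s, hs, hsl⟩ := hHl ‖x‖ (norm_nonneg x)
      refine ⟨_, continuous_norm.continuousAt.preimage_mem_nhds hs, fun z hz z' hz' => ?_⟩
      refine (hsl _ hz _ hz').trans ?_
      exact mul_le_mul_of_nonneg_left (abs_norm_sub_norm_le z z')
        (div_nonneg zero_le_two hx0.le)
  · intro t z hz
    have h1 := (abs_le.1 hz).2
    have h2 : 4 / κ * (‖f (γ₀ t) - y‖ - ‖f z - y‖) ≤ 4 / κ * M :=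
      mul_le_mul_of_nonneg_left (by linarith [hM t, norm_nonneg (f z - y)]) hC
    have := hD' t
    change H ‖z‖ ≤ _
    linarith

/-- If `f x₁ = f x₂ = y`, a path from `x₁` to `x₂` can be deformed, with fixed end points, into the
preimage of a small ball around `y`. The part of that preimage lying in the domain of the local
inverse at `x₁` is relatively clopen, so the path stays in that domain, where `f` is injective. -/
theorem injective_of_deformation {X Y : Type*} [NormedAddCommGroup X] [NormedSpace ℝ X]
    [CompleteSpace X] [NormedAddCommGroup Y] [NormedSpace ℝ Y]
    {f : X → Y} {f' : X → X ≃L[ℝ] Y} (hf : Continuous f)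
    (hst : ∀ x : X, HasStrictFDerivAt f (f' x : X →L[ℝ] Y) x)
    (hdef : ∀ y : Y, ∀ a > 0, ∀ γ₀ : C(unitInterval, X), ∃ γ : C(unitInterval, X),
      ∀ t, ‖f (γ t) - y‖ ≤ a ∧ (f (γ₀ t) = y → γ t = γ₀ t)) :
    Function.Injective f := by
  intro x₁ x₂ hx
  let e := (hst x₁).toOpenPartialHomeomorph f
  have he : ∀ z, e z = f z := fun z => rfl
  have hx₁ : x₁ ∈ e.source := (hst x₁).mem_toOpenPartialHomeomorph_source
  have hy : e.target ∈ 𝓝 (f x₁) := e.open_target.mem_nhds (he x₁ ▸ e.map_source hx₁)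
  obtain ⟨a, ha, hball⟩ := Metric.nhds_basis_closedBall.mem_iff.1 hy
  obtain ⟨γ, hγ⟩ := hdef (f x₁) a ha
    ⟨fun t => AffineMap.lineMap x₁ x₂ (t : ℝ), by
      exact AffineMap.lineMap_continuous.comp continuous_subtype_val⟩
  have h0 : γ 0 = x₁ := by simpa using (hγ 0).2 (by simp)
  have h1 : γ 1 = x₂ := by simpa using (hγ 1).2 (by simp [hx])
  have htgt : ∀ t, f (γ t) ∈ e.target := fun t =>
    hball (mem_closedBall_iff_norm.2 (hγ t).1)
  let S : Set unitInterval := {t | γ t ∈ e.source}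
  have hSo : IsOpen S := e.open_source.preimage γ.continuous
  have hSc : IsClosed S := by
    have hS : S = {t | e.symm (f (γ t)) = γ t} := by
      ext t
      constructor
      · intro ht; exact e.left_inv ht
      · intro ht
        have ht' : e.symm (f (γ t)) = γ t := ht
        change γ t ∈ e.source
        rw [← ht']
        exact e.map_target (htgt t)
    rw [hS]
    exact isClosed_eq (e.continuousOn_symm.comp_continuous (hf.comp γ.continuous) htgt)
      γ.continuous
  have hS1 : S = univ := IsClopen.eq_univ ⟨hSc, hSo⟩ ⟨0, by change γ 0 ∈ e.source; rwa [h0]⟩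
  have hx₂ : x₂ ∈ e.source := by
    have : (1 : unitInterval) ∈ S := hS1 ▸ mem_univ _
    rw [← h1]; exact this
  exact e.injOn hx₁ hx₂ hx

theorem global_inverse_theorem {X Y : Type*} [NormedAddCommGroup X] [NormedSpace ℝ X] [CompleteSpace X]
    [NormedAddCommGroup Y] [NormedSpace ℝ Y] [CompleteSpace Y]
    (f : X → Y) (f' : X → X ≃L[ℝ] Y)
    (hC1 : ContDiff ℝ 1 f)
    (hdf : ∀ x : X, HasFDerivAt f (f' x : X →L[ℝ] Y) x)
    (h : ℝ → ℝ)
    (hcont : ContinuousOn h (Set.Ici 0))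
    (hmono : MonotoneOn h (Set.Ici 0))
    (hnonneg : ∀ t ∈ Set.Ici (0:ℝ), 0 ≤ h t)
    (hint : ∫⁻ ρ in Set.Ioi (0:ℝ), ENNReal.ofReal (1 / (1 + h ρ)) = ⊤)
    (hPS : ∀ y : Y, WeightedChangPS (fun x => (1/2 : ℝ) * ‖f x - y‖ ^ 2) h) :
    NormCoercive f ∧ Function.Bijective f ∧
      ∃ g : Y → X, ContDiff ℝ 1 g ∧ Function.LeftInverse g f ∧ Function.RightInverse g f := by
  have hst : ∀ x : X, HasStrictFDerivAt f (f' x : X →L[ℝ] Y) x := fun x =>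
    hC1.contDiffAt.hasStrictFDerivAt' (hdf x) one_ne_zero
  have hfc := hC1.continuous
  obtain ⟨H, hHc, hHl, hHB⟩ := exists_weight_primitive hcont hnonneg hint
  have hsurj : Function.Surjective f := by
    intro y
    by_contra hy
    push Not at hy
    -- if `y` is missed, every negative level can be reached, which is absurd
    obtain ⟨C, -, hC⟩ := exists_uniform_deformation hC1 hdf hnonneg hmono hHc hHl hHB (hPS y)
      (a := -1) (b := -2) (by norm_num) ‖f 0 - y‖ (Or.inr hy)
    obtain ⟨γ, hγ⟩ := hC Unit (ContinuousMap.const _ 0) fun t => by simp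
    linarith [(hγ ()).1, norm_nonneg (f (γ ()) - y)]
  have hinj : Function.Injective f := by
    refine injective_of_deformation hfc hst fun y a ha γ₀ => ?_
    obtain ⟨M, hM⟩ :=
      (isCompact_range (f := fun t => ‖f (γ₀ t) - y‖) (by fun_prop)).bddAbove
    obtain ⟨C, -, hC⟩ := exists_uniform_deformation hC1 hdf hnonneg hmono hHc hHl hHB (hPS y)
      (half_lt_self ha) M (Or.inl (half_pos ha))
    obtain ⟨γ, hγ⟩ := hC unitInterval γ₀ fun t => hM ⟨t, rfl⟩
    exact ⟨γ, fun t => ⟨(hγ t).1, fun ht => (hγ t).2.2 (by simpa [ht] using (half_pos ha).le)⟩⟩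
  let F : X ≃ₜ Y := (Equiv.ofBijective f ⟨hinj, hsurj⟩).toHomeomorphOfContinuousOpen hfc
    (isOpenMap_of_hasStrictFDerivAt_equiv hst)
  have hF : ∀ x, F x = f x := fun x => rfl
  have hleft : Function.LeftInverse F.symm f := F.symm_apply_apply
  refine ⟨?_, ⟨hinj, hsurj⟩, F.symm, F.contDiff_symm hdf hC1, hleft, F.apply_symm_apply⟩
  -- preimages of points close to `0` stay in a fixed ball
  obtain ⟨a, ha, hball⟩ := Metric.nhds_basis_closedBall.mem_iff.1
    (F.symm.continuous.norm.continuousAt.eventually_le_const (lt_add_one ‖F.symm 0‖))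
  refine tendsto_atTop.2 fun M => ?_
  obtain ⟨C, hC0, hC⟩ := exists_uniform_deformation hC1 hdf hnonneg hmono hHc hHl hHB (hPS 0)
    (half_lt_self ha) M (Or.inl (half_pos ha))
  obtain ⟨D, hD⟩ := (isCompact_Icc (a := (0 : ℝ)) (b := ‖F.symm 0‖ + 1)).bddAbove_image
    hHc.continuousOn
  obtain ⟨R, -, hR⟩ := hHB (D + C * M)
  refine ((eventually_gt_atTop R).comap _).mono fun x hx => ?_
  by_contra hlt
  push Not at hlt
  obtain ⟨γ, hγ⟩ := hC Unit (ContinuousMap.const _ x) fun t => by simpa using hlt.le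
  obtain ⟨g1, g2, -⟩ := hγ ()
  simp only [sub_zero, ContinuousMap.const_apply] at g1 g2
  have g3 : ‖γ ()‖ ≤ ‖F.symm 0‖ + 1 := by
    have := hball (mem_closedBall_zero_iff.2 g1)
    simpa [hleft (γ ())] using this
  have g4 : H ‖γ ()‖ ≤ D := hD ⟨_, ⟨norm_nonneg _, g3⟩, rfl⟩
  have g5 : C * (‖f x‖ - ‖f (γ ())‖) ≤ C * M :=
    mul_le_mul_of_nonneg_left (by linarith [norm_nonneg (f (γ ()))]) hC0
  have g6 := (abs_le.1 g2).1
  exact absurd (hR ‖x‖ (by linarith)) (not_le.2 hx)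
end
end

section
/- Let X be a real Banach space, let Y be a real Hilbert space, and let f : X → Y be a local C¹-diffeomorphism. If for every y ∈ Y the C¹ functional F_y(x) = ½‖f(x) − y‖² satisfies the Palais–Smale condition (every sequence {x_n} with {F_y(x_n)} bounded and ‖dF_y(x_n)‖ → 0 has a strongly convergent subsequence), then f is a C¹-diffeomorphism of X onto Y. -/
/-!
Fix `y` and put `F x = ½‖f x - y‖²`. Its derivative at `x` is `v ↦ ⟪f x - y, df(x) v⟫`, so, `df(x)`
being onto, critical points of `F` are exactly the solutions of `f x = y`
(`eq_of_fderiv_eq_zero`).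

*Surjectivity.* `F` is bounded below, so Ekeland's principle (`exists_ekeland_point`) yields almost
critical points with `F` bounded (`exists_almost_critical`); the Palais–Smale condition gives a
critical point.

*Injectivity.* Suppose `f a = f b = y` with `a ≠ b`. As `f` is a local homeomorphism at `a`, it stays
at distance at least `r > 0` from `y` on a small sphere around `a`, so every path from `a` to `b`
climbs to height `½ r²` (`exists_mountain_ridge`). Ekeland's principle on the complete space of paths
from `a` to `b`, applied to `γ ↦ max (F ∘ γ)`, yields almost critical points of `F` at height at
least `½ r²` (`exists_almost_critical_mountain_pass`). The Palais–Smale condition produces a critical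
point with `F > 0`, which is impossible.

A bijective local diffeomorphism is a homeomorphism, and its inverse is `C¹` by the inverse function
theorem.
-/

open Filter Topology Set

noncomputable section

/-! ### Ekeland's principle and almost critical points -/

/-- Weak form of Ekeland's variational principle for a nonnegative continuous function. -/
lemma exists_ekeland_point {M : Type*} [MetricSpace M] [CompleteSpace M] {Φ : M → ℝ}
    (hΦ : Continuous Φ) (h0 : ∀ x, 0 ≤ Φ x) (x₀ : M) {ε : ℝ} (hε : 0 < ε) :
    ∃ x, Φ x ≤ Φ x₀ ∧ ∀ y, Φ x ≤ Φ y + ε * dist x y := by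
  -- `y` is admissible from `x` when `Φ y + ε * dist x y ≤ Φ x`; move each time to an admissible
  -- point that is almost minimal among the admissible ones.
  have step : ∀ (n : ℕ) (x : M), ∃ z, Φ z + ε * dist x z ≤ Φ x ∧
      ∀ y, Φ y + ε * dist x y ≤ Φ x → Φ z ≤ Φ y + (1 / 2 : ℝ) ^ n := by
    intro n x
    set S : Set ℝ := Φ '' {y | Φ y + ε * dist x y ≤ Φ x} with hS
    have hne : S.Nonempty := ⟨Φ x, x, by simp, rfl⟩
    have hbdd : BddBelow S := ⟨0, by rintro _ ⟨y, -, rfl⟩; exact h0 y⟩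
    obtain ⟨_, ⟨z, hz, rfl⟩, hlt⟩ :=
      exists_lt_of_csInf_lt hne
        (lt_add_of_pos_right (sInf S) (show (0 : ℝ) < (1 / 2) ^ n by positivity))
    refine ⟨z, hz, fun y hy => ?_⟩
    have : sInf S ≤ Φ y := csInf_le hbdd ⟨y, hy, rfl⟩
    linarith
  choose s hs1 hs2 using step
  let x : ℕ → M := fun n => Nat.rec x₀ (fun n p => s n p) n
  have hx : ∀ n, x (n + 1) = s n (x n) := fun n => rfl
  have hadm : ∀ n m, n ≤ m → Φ (x m) + ε * dist (x n) (x m) ≤ Φ (x n) := by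
    intro n m hnm
    induction m, hnm using Nat.le_induction with
    | base => simp
    | succ m _ ih =>
      have h1 := hs1 m (x m)
      rw [← hx] at h1
      have h2 := mul_le_mul_of_nonneg_left (dist_triangle (x n) (x m) (x (m + 1))) hε.le
      linarith
  have hanti : Antitone (fun n => Φ (x n)) := by
    intro n m hnm
    have := hadm n m hnm
    have := mul_nonneg hε.le (dist_nonneg (x := x n) (y := x m))
    simp only
    linarith
  have hbdd : BddBelow (range fun n => Φ (x n)) := ⟨0, by rintro _ ⟨n, rfl⟩; exact h0 _⟩
  set L := ⨅ n, Φ (x n)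
  have hlim : Tendsto (fun n => Φ (x n)) atTop (𝓝 L) := tendsto_atTop_ciInf hanti hbdd
  have hd : ∀ n m, n ≤ m → dist (x n) (x m) ≤ (Φ (x n) - L) / ε := by
    intro n m hnm
    rw [le_div_iff₀ hε]
    have h1 := hadm n m hnm
    have h2 : L ≤ Φ (x m) := ciInf_le hbdd m
    linarith
  have hcau : CauchySeq x := by
    refine cauchySeq_of_le_tendsto_0 (fun n => 2 * ((Φ (x n) - L) / ε)) (fun n m N hn hm => ?_) ?_
    · have := dist_triangle_left (x n) (x m) (x N)
      have := hd N n hn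
      have := hd N m hm
      linarith
    · have : Tendsto (fun n => 2 * ((Φ (x n) - L) / ε)) atTop (𝓝 (2 * ((L - L) / ε))) :=
        ((hlim.sub_const L).div_const ε).const_mul 2
      simpa using this
  obtain ⟨z, hz⟩ := cauchySeq_tendsto_of_complete hcau
  have hΦz : Tendsto (fun n => Φ (x n)) atTop (𝓝 (Φ z)) := (hΦ.tendsto z).comp hz
  have hzadm : ∀ n, Φ z + ε * dist (x n) z ≤ Φ (x n) := by
    intro n
    refine le_of_tendsto (hΦz.add ((tendsto_const_nhds.dist hz).const_mul ε)) ?_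
    filter_upwards [eventually_ge_atTop n] with m hm using hadm n m hm
  refine ⟨z, ?_, fun y => ?_⟩
  · have := hzadm 0
    have := mul_nonneg hε.le (dist_nonneg (x := x 0) (y := z))
    change Φ z ≤ Φ (x 0)
    linarith
  · by_contra! hy
    have hle : ∀ n, Φ z ≤ Φ y + (1 / 2 : ℝ) ^ n := by
      intro n
      have h1 : Φ y + ε * dist (x n) y ≤ Φ (x n) := by
        have := mul_le_mul_of_nonneg_left (dist_triangle (x n) z y) hε.le
        have := hzadm n
        linarith
      have h2 := hs2 n (x n) y h1
      rw [← hx] at h2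
      have := hzadm (n + 1)
      have := mul_nonneg hε.le (dist_nonneg (x := x (n + 1)) (y := z))
      linarith
    have hlim2 : Tendsto (fun n : ℕ => Φ y + (1 / 2 : ℝ) ^ n) atTop (𝓝 (Φ y + 0)) :=
      (tendsto_pow_atTop_nhds_zero_of_lt_one (by norm_num) (by norm_num)).const_add _
    have := ge_of_tendsto' hlim2 hle
    have := mul_nonneg hε.le (dist_nonneg (x := z) (y := y))
    linarith

/-- If `F` is strictly differentiable at `p` and drops at rate at most `ε` along steps `h n • w n`
from base points tending to `p`, then so does its derivative at `p`. The base points move because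
in the mountain pass argument they are maximum points of varying paths. -/
lemma neg_le_deriv_of_steps {X : Type*} [NormedAddCommGroup X] [NormedSpace ℝ X]
    {F : X → ℝ} {A : X →L[ℝ] ℝ} {p w : X} (hF : HasStrictFDerivAt F A p) {ε : ℝ}
    {q v : ℕ → X} {h : ℕ → ℝ} (hq : Tendsto q atTop (𝓝 p)) (hv : Tendsto v atTop (𝓝 w))
    (hh : Tendsto h atTop (𝓝 0)) (hpos : ∀ n, 0 < h n)
    (hdrop : ∀ n, F (q n) - ε * h n ≤ F (q n + h n • v n)) : -ε ≤ A w := by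
  have hpair : Tendsto (fun n => (q n + h n • v n, q n)) atTop (𝓝 (p, p)) := by
    refine Tendsto.prodMk_nhds ?_ hq
    simpa using hq.add (hh.smul hv)
  have ho := hF.isLittleO.comp_tendsto hpair
  have hO : ((fun r : X × X => r.1 - r.2) ∘ fun n => (q n + h n • v n, q n)) =O[atTop] h := by
    have h1 : v =O[atTop] (fun _ => (1 : ℝ)) := hv.isBigO_one ℝ
    have h2 := (Asymptotics.isBigO_refl h atTop).smul h1
    simpa [Function.comp_def] using h2
  have hz := (ho.trans_isBigO hO).tendsto_div_nhds_zero
  have hA : Tendsto (fun n => A (v n)) atTop (𝓝 (A w)) := (A.continuous.tendsto w).comp hv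
  have hsum := hz.add hA
  rw [zero_add] at hsum
  refine ge_of_tendsto' hsum fun n => ?_
  have := hpos n
  have := hdrop n
  simp only [Function.comp_def, add_sub_cancel_left, map_smul, smul_eq_mul]
  rw [sub_div, mul_div_cancel_left₀ _ (hpos n).ne', sub_add_cancel, le_div_iff₀ (hpos n)]
  linarith

lemma exists_descent_direction {X : Type*} [NormedAddCommGroup X] [NormedSpace ℝ X]
    (A : X →L[ℝ] ℝ) {ε : ℝ} (hA : ε < ‖A‖) : ∃ v, ‖v‖ ≤ 1 ∧ A v < -ε := by
  obtain ⟨v, hv, hlt⟩ := A.exists_lt_apply_of_lt_opNorm hA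
  rw [Real.norm_eq_abs, lt_abs] at hlt
  rcases hlt with h | h
  · exact ⟨-v, by simpa using hv.le, by simpa using h⟩
  · exact ⟨v, hv.le, by linarith⟩

lemma exists_almost_critical {X : Type*} [NormedAddCommGroup X] [NormedSpace ℝ X]
    [CompleteSpace X] {F : X → ℝ} (hF : ContDiff ℝ 1 F) (h0 : ∀ x, 0 ≤ F x) (x₀ : X)
    {ε : ℝ} (hε : 0 < ε) : ∃ x, F x ≤ F x₀ ∧ ‖fderiv ℝ F x‖ ≤ ε := by
  obtain ⟨x, hx, hmin⟩ := exists_ekeland_point hF.continuous h0 x₀ hε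
  refine ⟨x, hx, ?_⟩
  by_contra! hlt
  obtain ⟨v, hv, hneg⟩ := exists_descent_direction _ hlt
  have := neg_le_deriv_of_steps (hF.contDiffAt.hasStrictFDerivAt one_ne_zero)
    (ε := ε) (q := fun _ => x) (v := fun _ => v) (h := fun n : ℕ => 1 / ((n : ℝ) + 1))
    tendsto_const_nhds tendsto_const_nhds tendsto_one_div_add_atTop_nhds_zero_nat
    (fun n => by positivity) (fun n => by
      have hpos : (0 : ℝ) < 1 / ((n : ℝ) + 1) := by positivity
      have h1 := hmin (x + (1 / ((n : ℝ) + 1)) • v)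
      have h2 : dist x (x + (1 / ((n : ℝ) + 1)) • v) ≤ 1 / ((n : ℝ) + 1) := by
        rw [dist_self_add_right, norm_smul, Real.norm_of_nonneg hpos.le]
        exact mul_le_of_le_one_right hpos.le hv
      have h3 := mul_le_mul_of_nonneg_left h2 hε.le
      linarith)
  linarith

/-! ### Mountain pass -/

/-- Mountain pass step: if every path from `a` to `b` climbs to height `ρ > 0`, while `F` vanishes
at `a` and `b`, there are almost critical points at height at least `ρ`, below a bound `C`
independent of `ε`. The point is a maximum point of `F` along a path which is an Ekeland point of
`γ ↦ max (F ∘ γ)`: if every maximum point admitted a steep descent direction, a partition of unity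
would glue these directions to a deformation lowering the maximum too fast. -/
lemma exists_almost_critical_mountain_pass {X : Type*} [NormedAddCommGroup X] [NormedSpace ℝ X]
    [CompleteSpace X] {F : X → ℝ} (hF : ContDiff ℝ 1 F) (h0 : ∀ x, 0 ≤ F x) {a b : X}
    (ha : F a = 0) (hb : F b = 0) {ρ : ℝ} (hρ : 0 < ρ)
    (hmount : ∀ γ : C(unitInterval, X), γ 0 = a → γ 1 = b → ∃ s, ρ ≤ F (γ s)) :
    ∃ C : ℝ, ∀ ε : ℝ, 0 < ε → ∃ x, ρ ≤ F x ∧ F x ≤ C ∧ ‖fderiv ℝ F x‖ ≤ ε := by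
  let Γ : Set C(unitInterval, X) := {γ | γ 0 = a ∧ γ 1 = b}
  have hΓ : IsClosed Γ :=
    (isClosed_eq (continuous_eval_const 0) continuous_const).inter
      (isClosed_eq (continuous_eval_const 1) continuous_const)
  have : CompleteSpace Γ := hΓ.completeSpace_coe
  let Fc : C(X, ℝ) := ⟨F, hF.continuous⟩
  -- As `F` is nonnegative, the sup norm of `F ∘ γ` is the maximum of `F` along `γ`.
  let Φ : C(unitInterval, X) → ℝ := fun γ => ‖Fc.comp γ‖
  have hΦ : Continuous Φ := (ContinuousMap.continuous_postcomp Fc).norm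
  have hle : ∀ γ s, F (γ s) ≤ Φ γ := fun γ s => (Fc.comp γ).apply_le_norm s
  have hmax : ∀ γ, ∃ s, F (γ s) = Φ γ := by
    intro γ
    obtain ⟨s, -, hs⟩ := isCompact_univ.exists_isMaxOn (univ_nonempty (α := unitInterval))
      (hF.continuous.comp γ.continuous).continuousOn
    refine ⟨s, le_antisymm (hle γ s) ?_⟩
    refine ((Fc.comp γ).norm_le (h0 _)).2 fun t => ?_
    have h1 : ‖(Fc.comp γ) t‖ = F (γ t) := Real.norm_of_nonneg (h0 _)
    rw [h1]
    exact hs (mem_univ t)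
  let γ₀ : C(unitInterval, X) := ⟨fun s => a + (s : ℝ) • (b - a), by fun_prop⟩
  have hγ₀ : γ₀ ∈ Γ := by constructor <;> simp [γ₀]
  refine ⟨Φ γ₀, fun ε hε => ?_⟩
  obtain ⟨⟨γ, hγ⟩, hγle, hmin⟩ := exists_ekeland_point (M := Γ) (Φ := fun γ => Φ γ)
    (hΦ.comp continuous_subtype_val) (fun γ => norm_nonneg _) ⟨γ₀, hγ₀⟩ hε
  simp only at hγle
  have hρΦ : ρ ≤ Φ γ := by
    obtain ⟨s, hs⟩ := hmount γ hγ.1 hγ.2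
    exact hs.trans (hle γ s)
  by_contra! hcon
  have hsteep : ∀ s, F (γ s) = Φ γ → ε < ‖fderiv ℝ F (γ s)‖ := fun s hs =>
    hcon (γ s) (hs ▸ hρΦ) (hs ▸ hγle)
  have hdF : Continuous (fderiv ℝ F) := hF.continuous_fderiv one_ne_zero
  let t : unitInterval → Set X := fun s => {v | ‖v‖ ≤ 1 ∧
    (F (γ s) = Φ γ → fderiv ℝ F (γ s) v < -ε) ∧ (s = 0 ∨ s = 1 → v = 0)}
  have htconv : ∀ s, Convex ℝ (t s) := by
    intro s v hv w hw c d hc hd hcd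
    refine ⟨?_, fun hs => ?_, fun hs => ?_⟩
    · simpa using (convex_closedBall (0 : X) 1) (by simpa using hv.1) (by simpa using hw.1) hc hd hcd
    · exact (convex_halfSpace_lt (fderiv ℝ F (γ s)).isLinear (-ε)) (hv.2.1 hs) (hw.2.1 hs) hc hd hcd
    · rw [hv.2.2 hs, hw.2.2 hs]; simp
  have hFγ : Continuous fun s => F (γ s) := hF.continuous.comp γ.continuous
  have htloc : ∀ s, ∃ v, ∀ᶠ r in 𝓝 s, v ∈ t r := by
    intro s
    by_cases hs : F (γ s) = Φ γ
    · obtain ⟨v, hv, hneg⟩ := exists_descent_direction _ (hsteep s hs)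
      refine ⟨v, ?_⟩
      have hc : Continuous fun r => fderiv ℝ F (γ r) v :=
        (hdF.comp γ.continuous).clm_apply continuous_const
      have hFs : 0 < F (γ s) := by rw [hs]; linarith
      filter_upwards [hc.continuousAt.eventually_lt continuousAt_const hneg,
        continuousAt_const.eventually_lt hFγ.continuousAt hFs] with r hr1 hr2
      refine ⟨hv, fun _ => hr1, ?_⟩
      rintro (rfl | rfl)
      · rw [hγ.1, ha] at hr2; exact absurd hr2 (lt_irrefl _)
      · rw [hγ.2, hb] at hr2; exact absurd hr2 (lt_irrefl _)
    · refine ⟨0, ?_⟩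
      filter_upwards [hFγ.continuousAt.eventually_ne hs] with r hr
      exact ⟨by simp, fun h => absurd h hr, fun _ => rfl⟩
  obtain ⟨w, hw⟩ := exists_continuous_forall_mem_convex_of_local_const htconv htloc
  let h : ℕ → ℝ := fun n => 1 / ((n : ℝ) + 1)
  have hh : Tendsto h atTop (𝓝 0) := tendsto_one_div_add_atTop_nhds_zero_nat
  have hpos : ∀ n, 0 < h n := fun n => by positivity
  have hη : ∀ n, γ + h n • w ∈ Γ := fun n => by
    constructor
    · simp [(hw 0).2.2 (Or.inl rfl), hγ.1]
    · simp [(hw 1).2.2 (Or.inr rfl), hγ.2]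
  have hlow : ∀ n, Φ γ - ε * h n ≤ Φ (γ + h n • w) := by
    intro n
    have h1 : Φ γ ≤ Φ (γ + h n • w) + ε * dist γ (γ + h n • w) := hmin ⟨_, hη n⟩
    have h2 : dist γ (γ + h n • w) ≤ h n := by
      rw [ContinuousMap.dist_le (hpos n).le]
      intro s
      simp only [ContinuousMap.add_apply, ContinuousMap.smul_apply, dist_self_add_right, norm_smul,
        Real.norm_of_nonneg (hpos n).le]
      exact mul_le_of_le_one_right (hpos n).le (hw s).1
    have h3 := mul_le_mul_of_nonneg_left h2 hε.le
    linarith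
  choose σ hσ using fun n => hmax (γ + h n • w)
  obtain ⟨s, -, φ, hφ, hs⟩ := isCompact_univ.tendsto_subseq (x := σ) (fun n => mem_univ _)
  have hhφ : Tendsto (fun n => h (φ n)) atTop (𝓝 0) := hh.comp hφ.tendsto_atTop
  have hγs : Tendsto (fun n => γ (σ (φ n))) atTop (𝓝 (γ s)) := (γ.continuous.tendsto s).comp hs
  have hws : Tendsto (fun n => w (σ (φ n))) atTop (𝓝 (w s)) := (w.continuous.tendsto s).comp hs
  have hdrop : ∀ n, Φ γ - ε * h (φ n) ≤ F (γ (σ (φ n)) + h (φ n) • w (σ (φ n))) := by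
    intro n
    have h1 := hlow (φ n)
    rw [← hσ] at h1
    exact h1
  have hsmax : F (γ s) = Φ γ := by
    refine le_antisymm (hle γ s) ?_
    have h1 : Tendsto (fun n => Φ γ - ε * h (φ n)) atTop (𝓝 (Φ γ - ε * 0)) :=
      (hhφ.const_mul ε).const_sub _
    have h2 : Tendsto (fun n => F (γ (σ (φ n)) + h (φ n) • w (σ (φ n)))) atTop
        (𝓝 (F (γ s + (0 : ℝ) • w s))) :=
      (hF.continuous.tendsto _).comp (hγs.add (hhφ.smul hws))
    simpa using le_of_tendsto_of_tendsto' h1 h2 hdrop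
  have := neg_le_deriv_of_steps ((hF.contDiffAt (x := γ s)).hasStrictFDerivAt one_ne_zero)
    hγs hws hhφ (fun n => hpos _)
    (fun n => (sub_le_sub_right (hle γ _) _).trans (hdrop n))
  have := (hw s).2.1 hsmax
  linarith

/-- Around a point `a` of a fibre of a local diffeomorphism, `f` stays away from the value `f a`
on a small sphere, which every path to another point `b` has to cross. -/
lemma exists_mountain_ridge {X Y : Type*} [NormedAddCommGroup X] [NormedSpace ℝ X]
    [CompleteSpace X] [NormedAddCommGroup Y] [NormedSpace ℝ Y] {f : X → Y} {A : X ≃L[ℝ] Y}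
    {a b : X} (hf : HasStrictFDerivAt f (A : X →L[ℝ] Y) a) (hab : a ≠ b) :
    ∃ r > 0, ∀ γ : C(unitInterval, X), γ 0 = a → γ 1 = b → ∃ s, r ≤ ‖f (γ s) - f a‖ := by
  let e := hf.toOpenPartialHomeomorph f
  have hsrc : e.source ∈ 𝓝 a := e.open_source.mem_nhds hf.mem_toOpenPartialHomeomorph_source
  obtain ⟨δ, hδ, hball⟩ := Metric.nhds_basis_closedBall.mem_iff.1 hsrc
  set δ' := min δ (dist b a) with hδ'
  have hδ'pos : 0 < δ' := lt_min hδ (dist_pos.2 hab.symm)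
  have himg : f '' Metric.ball a δ' ∈ 𝓝 (f a) := by
    rw [← hf.map_nhds_eq_of_equiv]
    exact image_mem_map (Metric.ball_mem_nhds a hδ'pos)
  obtain ⟨r, hr, hsub⟩ := Metric.mem_nhds_iff.1 himg
  refine ⟨r, hr, fun γ h0 h1 => ?_⟩
  have hc : Continuous fun s => dist (γ s) a := by fun_prop
  obtain ⟨s, hs⟩ : δ' ∈ range fun s => dist (γ s) a :=
    mem_range_of_exists_le_of_exists_ge hc ⟨0, by simp [h0, hδ'pos.le]⟩
      ⟨1, by simp [h1, hδ']⟩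
  refine ⟨s, ?_⟩
  by_contra! hlt
  obtain ⟨x, hx, hfx⟩ := hsub (mem_ball_iff_norm.2 hlt)
  have hx' : dist x a < δ' := hx
  have : x = γ s := e.injOn (hball (hx'.le.trans (min_le_left _ _)))
    (hball ((le_of_eq hs).trans (min_le_left _ _))) hfx
  simp only at hs
  rw [this, hs] at hx'
  exact lt_irrefl _ hx'

/-! ### Critical points of `½‖f x - y‖²` -/

lemma eq_of_fderiv_eq_zero {X Y : Type*} [NormedAddCommGroup X] [NormedSpace ℝ X]
    [NormedAddCommGroup Y] [InnerProductSpace ℝ Y] {f : X → Y} {A : X ≃L[ℝ] Y} {x : X} {y : Y}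
    (hf : HasFDerivAt f (A : X →L[ℝ] Y) x)
    (hx : fderiv ℝ (fun u => (1/2 : ℝ) * ‖f u - y‖ ^ 2) x = 0) : f x = y := by
  have h1 := ((hf.sub_const y).norm_sq.const_mul (1/2 : ℝ)).fderiv
  rw [hx] at h1
  have h2 := congrArg (fun B : X →L[ℝ] ℝ => B (A.symm (f x - y))) h1
  have h3 : 0 = inner ℝ (f x) (f x - y) - inner ℝ y (f x - y) := by simpa using h2
  rw [← inner_sub_left] at h3
  exact sub_eq_zero.1 (inner_self_eq_zero.1 h3.symm)

/-- The Palais–Smale condition turns almost critical points at height at least `ρ` into a genuine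
critical point at height at least `ρ`. -/
lemma exists_critical_of_almost_critical {X : Type*} [NormedAddCommGroup X] [NormedSpace ℝ X]
    {F : X → ℝ} (hF : ContDiff ℝ 1 F) (h0 : ∀ x, 0 ≤ F x)
    (hPS : ∀ x : ℕ → X, (∃ C : ℝ, ∀ n, |F (x n)| ≤ C) →
      Tendsto (fun n => ‖fderiv ℝ F (x n)‖) atTop (𝓝 0) →
      ∃ (z : X) (φ : ℕ → ℕ), StrictMono φ ∧ Tendsto (fun n => x (φ n)) atTop (𝓝 z))
    {ρ C : ℝ} (h : ∀ ε : ℝ, 0 < ε → ∃ x, ρ ≤ F x ∧ F x ≤ C ∧ ‖fderiv ℝ F x‖ ≤ ε) :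
    ∃ z, ρ ≤ F z ∧ fderiv ℝ F z = 0 := by
  choose x hx1 hx2 hx3 using fun n : ℕ => h (1 / ((n : ℝ) + 1)) (by positivity)
  have hlim : Tendsto (fun n => ‖fderiv ℝ F (x n)‖) atTop (𝓝 0) :=
    squeeze_zero (fun n => norm_nonneg _) hx3 tendsto_one_div_add_atTop_nhds_zero_nat
  obtain ⟨z, φ, hφ, hz⟩ := hPS x ⟨C, fun n => by rw [abs_of_nonneg (h0 _)]; exact hx2 n⟩ hlim
  refine ⟨z, ge_of_tendsto' ((hF.continuous.tendsto z).comp hz) fun n => hx1 _, ?_⟩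
  have h1 := (((hF.continuous_fderiv one_ne_zero).norm).tendsto z).comp hz
  exact norm_eq_zero.1 (tendsto_nhds_unique h1 (hlim.comp hφ.tendsto_atTop))

/-! ### Global diffeomorphism -/

theorem idczak_global_diffeomorphism {X Y : Type*}
    [NormedAddCommGroup X] [NormedSpace ℝ X] [CompleteSpace X]
    [NormedAddCommGroup Y] [InnerProductSpace ℝ Y] [CompleteSpace Y]
    (f : X → Y) (f' : X → X ≃L[ℝ] Y)
    (hC1 : ContDiff ℝ 1 f)
    (hdf : ∀ x : X, HasFDerivAt f (f' x : X →L[ℝ] Y) x)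
    (hPS : ∀ y : Y, ∀ x : ℕ → X,
      (∃ C : ℝ, ∀ n, |(1/2 : ℝ) * ‖f (x n) - y‖ ^ 2| ≤ C) →
      Filter.Tendsto
        (fun n => ‖fderiv ℝ (fun u => (1/2 : ℝ) * ‖f u - y‖ ^ 2) (x n)‖)
        Filter.atTop (nhds 0) →
      ∃ (z : X) (φ : ℕ → ℕ), StrictMono φ ∧
        Filter.Tendsto (fun n => x (φ n)) Filter.atTop (nhds z)) :
    Function.Bijective f ∧
      ∃ g : Y → X, ContDiff ℝ 1 g ∧ Function.LeftInverse g f ∧ Function.RightInverse g f := by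
  have hstrict : ∀ x, HasStrictFDerivAt f (f' x : X →L[ℝ] Y) x := fun x =>
    hC1.contDiffAt.hasStrictFDerivAt' (hdf x) one_ne_zero
  have hF : ∀ y : Y, ContDiff ℝ 1 fun u => (1/2 : ℝ) * ‖f u - y‖ ^ 2 := fun y =>
    contDiff_const.mul ((hC1.sub contDiff_const).norm_sq ℝ)
  have h0 : ∀ (y : Y) (x : X), 0 ≤ (1/2 : ℝ) * ‖f x - y‖ ^ 2 := fun y x => by positivity
  have hsurj : Function.Surjective f := by
    intro y
    obtain ⟨z, -, hz⟩ := exists_critical_of_almost_critical (hF y) (h0 y) (hPS y) (ρ := 0)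
      fun ε hε => (exists_almost_critical (hF y) (h0 y) 0 hε).imp fun x hx => ⟨h0 y x, hx⟩
    exact ⟨z, eq_of_fderiv_eq_zero (hdf z) hz⟩
  have hinj : Function.Injective f := by
    intro a b hab
    by_contra hne
    obtain ⟨r, hr, hridge⟩ := exists_mountain_ridge (hstrict a) hne
    obtain ⟨C, hC⟩ := exists_almost_critical_mountain_pass (hF (f a)) (h0 (f a)) (a := a) (b := b)
      (by simp) (by simp [hab]) (ρ := (1/2 : ℝ) * r ^ 2) (by positivity) fun γ hγ0 hγ1 =>
        (hridge γ hγ0 hγ1).imp fun s hs => by gcongr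
    obtain ⟨z, hz1, hz2⟩ :=
      exists_critical_of_almost_critical (hF (f a)) (h0 (f a)) (hPS (f a)) hC
    rw [eq_of_fderiv_eq_zero (hdf z) hz2, sub_self, norm_zero] at hz1
    have : 0 < r ^ 2 := by positivity
    linarith
  have hbij : Function.Bijective f := ⟨hinj, hsurj⟩
  let e : X ≃ₜ Y := (Equiv.ofBijective f hbij).toHomeomorphOfContinuousOpen hC1.continuous
    (isOpenMap_of_hasStrictFDerivAt_equiv hstrict)
  exact ⟨hbij, e.symm, e.contDiff_symm (f₀' := f') hdf hC1, e.symm_apply_apply, e.apply_symm_apply⟩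
end
end
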